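/- arXiv:1905.08470 — 2 statements merged into one kernel-verified Lean document; each statement's English description precedes it below -/
import Mathlib

section
/- In the semi-primitive cyclotomic setting, let T_0, T_1 be arbitrary (q−1)/2-subsets of F_q, and define S_1' = {x ∈ F_{q²} : Tr_{q²/q}(xω^m) ∈ F_q \ T_1}, A_0' = S_0 \ S_1', A_1' = S_1' \ S_0. Define C_0 = {(x,xy) : x ∈ D_0, y ∈ A_0} ∪ {(x,xy) : x ∈ D_1, y ∈ A_1} ∪ {(0,x) : x ∈ D_ε}, C_1 = {(x,xy) : x ∈ D_0, y ∈ A_0'} ∪ {(x,xy) : x ∈ D_1, y ∈ A_1'}, C_2 = {(x,xy) : x ∈ D_1, y ∈ A_0} ∪ {(x,xy) : x ∈ D_0, y ∈ A_1} ∪ {(0,x) : x ∈ D_{ε+1}} (subscript of D_{ε+1} mod 2), C_3 = {(x,xy) : x ∈ D_1, y ∈ A_0'} ∪ {(x,xy) : x ∈ D_0, y ∈ A_1'}. Then each C_i (i = 0,1,2,3) is of type Q, and with K_y = {(x,xy) : x ∈ F_{q²}} for y ∈ F_{q²} and K_∞ = {(0,x) : x ∈ F_{q²}} one has C_0 ∪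 C_2 ∪ {(0,0)} = (∪_{y ∈ A_0∪A_1} K_y) ∪ K_∞ and C_1 ∪ C_3 ∪ {(0,0)} = ∪_{y ∈ A_0'∪A_1'} K_y. -/
noncomputable section

def zetaP (p : ℕ) : ℂ := Complex.exp (2 * Real.pi * Complex.I / p)

/-- The canonical additive character `ψ(x) = ζ_p^{Tr_{L/F_p}(x)}`. -/
def psiL (p : ℕ) (L : Type) [Field L] [Fintype L] [CharP L p] (x : L) : ℂ :=
  letI : Algebra (ZMod p) L := ZMod.algebra L p
  zetaP p ^ (Algebra.trace (ZMod p) L x).val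

/-- `ψ_{a,b}(E) = Σ_{(x,y)∈E} ψ(ax+by)`. -/
def psiSum (p : ℕ) (L : Type) [Field L] [Fintype L] [CharP L p]
    (a b : L) (E : Set (L × L)) : ℂ :=
  ∑ᶠ z ∈ E, psiL p L (a * z.1 + b * z.2)

/-- a subset of `F_{q²} × F_{q²}` of type Q. -/
def IsTypeQ (p q : ℕ) (L : Type) [Field L] [Fintype L] [CharP L p]
    (E : Set (L × L)) : Prop :=
  E.ncard = (q ^ 4 - 1) / 4 ∧
    ∀ a b : L, (a, b) ≠ ((0 : L), (0 : L)) →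
      psiSum p L a b E = ((q : ℂ) ^ 2 - 1) / 4 ∨
      psiSum p L a b E = (-3 * (q : ℂ) ^ 2 - 1) / 4

/-- the cyclotomic class `C_i^{(N,q²)} = ω^i⟨ω^N⟩`. -/
def cyc (L : Type) [Field L] (ω : L) (N i : ℕ) : Set L :=
  {x | ∃ k : ℕ, x = ω ^ i * (ω ^ N) ^ k}

/-- ω is a primitive element (generator of the multiplicative group). -/
def IsPrim (L : Type) [Field L] (ω : L) : Prop :=
  ∀ x : L, x ≠ 0 → ∃ n : ℕ, x = ω ^ n

open scoped Classical in
structure Cfg (K L : Type) [Field K] [Fintype K] [Field L] [Fintype L] [Algebra K L]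
    (q : ℕ) (g θ : L) (χ : L → ℂ) : Prop where
  hK : Fintype.card K = q
  hL : Fintype.card L = q ^ 2
  θ0 : θ ≠ 0
  trθ : Algebra.trace K L θ = 0
  χ0 : χ 0 = 0
  χ1 : ∀ x, x ≠ 0 → χ x = 1 ∨ χ x = -1
  inv : ∀ (k : K) (x : L), k ≠ 0 → χ (algebraMap K L k * x) = χ x
  sw : ∀ x, χ (g * x) = - χ x

namespace Cfg

variable {K L : Type} [Field K] [Fintype K] [Field L] [Fintype L] [Algebra K L]
    {q : ℕ} {g θ : L} {χ : L → ℂ}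

lemma neg (c : Cfg K L q g θ χ) : Cfg K L q g θ (fun x => - χ x) where
  hK := c.hK
  hL := c.hL
  θ0 := c.θ0
  trθ := c.trθ
  χ0 := by simp [c.χ0]
  χ1 := fun x hx => by rcases c.χ1 x hx with h | h <;> simp [h]
  inv := fun k x hk => by simp [c.inv k x hk]
  sw := fun x => by simp [c.sw x]

lemma q1 (c : Cfg K L q g θ χ) : 1 < q := by
  rw [← c.hK]; exact Fintype.one_lt_card

lemma g0 (c : Cfg K L q g θ χ) : g ≠ 0 := by
  rintro rfl
  have h := c.sw 1
  rw [zero_mul, c.χ0] at h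
  rcases c.χ1 1 one_ne_zero with h1 | h1 <;> simp [h1] at h

lemma finrank2 (c : Cfg K L q g θ χ) : Module.finrank K L = 2 := by
  have h := Module.card_eq_pow_finrank (K := K) (V := L)
  rw [c.hK, c.hL] at h
  exact (Nat.pow_right_injective c.q1 h).symm

lemma ker (c : Cfg K L q g θ χ) (z : L) (hz : Algebra.trace K L z = 0) :
    ∃ k : K, z = algebraMap K L k * θ := by
  have hfin : FiniteDimensional K L := Module.Finite.of_finite
  have hs : Function.Surjective (Algebra.trace K L) := Algebra.trace_surjective K L
  have h1 := LinearMap.finrank_range_add_finrank_ker (Algebra.trace K L)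
  rw [LinearMap.range_eq_top.2 hs, finrank_top, c.finrank2, Module.finrank_self] at h1
  have h2 : Module.finrank K (LinearMap.ker (Algebra.trace K L)) = 1 := by omega
  let v : LinearMap.ker (Algebra.trace K L) := ⟨θ, c.trθ⟩
  have hv : v ≠ 0 := fun h => c.θ0 (congrArg Subtype.val h)
  obtain ⟨k, hk⟩ := (finrank_eq_one_iff_of_nonzero' v hv).1 h2 ⟨z, hz⟩
  refine ⟨k, ?_⟩
  have := congrArg Subtype.val hk
  simp only [SetLike.val_smul, v] at this
  rw [← this, Algebra.smul_def]

lemma inj (c : Cfg K L q g θ χ) (x : L) (h0 : Algebra.trace K L x = 0)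
    (h1 : Algebra.trace K L (x * g) = 0) : x = 0 := by
  obtain ⟨k, hk⟩ := c.ker _ h0
  obtain ⟨k', hk'⟩ := c.ker _ h1
  by_contra hx
  have k0 : k ≠ 0 := by rintro rfl; simp at hk; exact hx hk
  have k0' : k' ≠ 0 := by
    rintro rfl
    rw [map_zero, zero_mul] at hk'
    exact (mul_ne_zero hx c.g0) hk'
  have e1 := c.sw x
  rw [mul_comm, hk', c.inv _ _ k0', hk, c.inv _ _ k0] at e1
  rcases c.χ1 θ c.θ0 with h1 | h1 <;> rw [h1] at e1 <;> norm_num at e1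

lemma bij (c : Cfg K L q g θ χ) : Function.Bijective
    (fun x : L => ((Algebra.trace K L x, Algebra.trace K L (x * g)) : K × K)) := by
  rw [Fintype.bijective_iff_injective_and_card]
  constructor
  · intro x y h
    simp only [Prod.mk.injEq] at h
    have := c.inj (x - y) (by rw [map_sub, h.1, sub_self]) (by rw [sub_mul, map_sub, h.2, sub_self])
    exact sub_eq_zero.1 this
  · rw [Fintype.card_prod, c.hK, c.hL, sq]

lemma sum2 (c : Cfg K L q g θ χ) (F : K → K → ℂ) :
    ∑ x : L, F (Algebra.trace K L x) (Algebra.trace K L (x * g)) = ∑ s, ∑ t, F s t := by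
  rw [← Fintype.sum_prod_type']
  exact Function.Bijective.sum_comp c.bij (fun z : K × K => F z.1 z.2)

lemma sumη (c : Cfg K L q g θ χ) (η : L → ℂ) (h : ∀ x, η (g * x) = - η x) : ∑ x, η x = 0 := by
  have h1 : ∑ x, η (g * x) = ∑ x, η x :=
    Equiv.sum_comp (Equiv.mulLeft₀ g c.g0) η
  simp only [h, Finset.sum_neg_distrib] at h1
  linear_combination (-1/2 : ℂ) * h1

open scoped Classical in
lemma sumker (c : Cfg K L q g θ χ) (η : L → ℂ) (h0 : η 0 = 0)
    (hi : ∀ (k : K) (x : L), k ≠ 0 → η (algebraMap K L k * x) = η x) :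
    ∑ x : L, (if Algebra.trace K L x = 0 then η x else 0) = ((q : ℂ) - 1) * η θ := by
  rw [← Finset.sum_filter]
  have h1 : ∑ x ∈ Finset.univ.filter (fun x : L => Algebra.trace K L x = 0), η x
      = ∑ k : K, η (algebraMap K L k * θ) := by
    symm
    apply Finset.sum_bij (fun k _ => algebraMap K L k * θ)
    · intro k _
      simp only [Finset.mem_filter, Finset.mem_univ, true_and]
      rw [← Algebra.smul_def, map_smul, c.trθ, smul_zero]
    · intro a _ b _ hab
      exact (algebraMap K L).injective (mul_right_cancel₀ c.θ0 hab)
    · intro z hz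
      obtain ⟨k, hk⟩ := c.ker z (by simpa using hz)
      exact ⟨k, Finset.mem_univ _, hk.symm⟩
    · intros; rfl
  rw [h1, ← Finset.add_sum_erase _ _ (Finset.mem_univ (0 : K)), map_zero, zero_mul, h0, zero_add,
    Finset.sum_congr rfl (g := fun _ => η θ) (fun k hk => hi k θ (Finset.ne_of_mem_erase hk)),
    Finset.sum_const, Finset.card_erase_of_mem (Finset.mem_univ _), Finset.card_univ, c.hK,
    nsmul_eq_mul, Nat.cast_sub c.q1.le, Nat.cast_one]

open scoped Classical in
lemma key (c : Cfg K L q g θ χ) (η : L → ℂ) (h0 : η 0 = 0)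
    (hi : ∀ (k : K) (x : L), k ≠ 0 → η (algebraMap K L k * x) = η x)
    (hg : ∀ x, η (g * x) = - η x) (f : K → ℂ) :
    ∑ x : L, f (Algebra.trace K L x) * η x = η θ * (q * f 0 - ∑ k, f k) := by
  have hs := c.sumη η hg
  have hk := c.sumker η h0 hi
  have hq : (q : ℂ) - 1 ≠ 0 := by
    have := c.q1
    rw [sub_ne_zero]
    exact_mod_cast this.ne'
  have step : ∀ k ∈ Finset.univ.erase (0 : K),
      ∑ x : L, f (k * Algebra.trace K L x) * η x = ∑ x : L, f (Algebra.trace K L x) * η x := by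
    intro k hk
    have k0 : k ≠ 0 := Finset.ne_of_mem_erase hk
    have k0' : algebraMap K L k ≠ 0 := by simpa using k0
    rw [← Equiv.sum_comp (Equiv.mulLeft₀ (algebraMap K L k) k0')
      (fun x => f (Algebra.trace K L x) * η x)]
    apply Finset.sum_congr rfl
    intro x _
    simp only [Equiv.mulLeft₀_apply]
    rw [hi k x k0, ← Algebra.smul_def, map_smul, smul_eq_mul]
  have tot := Finset.sum_congr (rfl : Finset.univ.erase (0 : K) = _) step
  rw [Finset.sum_const, Finset.card_erase_of_mem (Finset.mem_univ _), Finset.card_univ, c.hK,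
    nsmul_eq_mul, Nat.cast_sub c.q1.le, Nat.cast_one, Finset.sum_comm] at tot
  have inner : ∀ x : L, ∑ k ∈ Finset.univ.erase (0 : K), f (k * Algebra.trace K L x) * η x
      = (∑ k, f k - f 0) * η x +
        (q * f 0 - ∑ k, f k) * (if Algebra.trace K L x = 0 then η x else 0) := by
    intro x
    rw [← Finset.sum_mul]
    split_ifs with hx
    · simp only [hx, mul_zero]
      rw [Finset.sum_const, Finset.card_erase_of_mem (Finset.mem_univ _), Finset.card_univ, c.hK,
        nsmul_eq_mul, Nat.cast_sub c.q1.le, Nat.cast_one]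
      ring
    · have e : ∑ k, f (k * Algebra.trace K L x) = ∑ k, f k :=
        Equiv.sum_comp (Equiv.mulRight₀ _ hx) f
      rw [← Finset.add_sum_erase _ _ (Finset.mem_univ (0 : K)), zero_mul] at e
      rw [← e]
      ring
  rw [Finset.sum_congr rfl (fun x _ => inner x), Finset.sum_add_distrib, ← Finset.mul_sum,
    ← Finset.mul_sum, hs, hk] at tot
  apply mul_left_cancel₀ hq
  rw [← tot]
  ring

/-- hypotheses on the characters -/
lemma sumΨ (c : Cfg K L q g θ χ) (φ : AddChar K ℂ) (hφ : ∑ k, φ k = 0) [DecidableEq L] (z : L) :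
    ∑ x : L, φ (Algebra.trace K L (x * z)) = if z = 0 then (q : ℂ) ^ 2 else 0 := by
  split_ifs with hz
  · simp [hz, c.hL]
  · have e : ∑ x : L, φ (Algebra.trace K L (x * z)) = ∑ x : L, φ (Algebra.trace K L x) :=
      Equiv.sum_comp (Equiv.mulRight₀ z hz) (fun x => φ (Algebra.trace K L x))
    rw [e, c.sum2 (fun s _ => φ s)]
    simp [← Finset.mul_sum, hφ]

lemma ηinv (c : Cfg K L q g θ χ) (w b : L) (k : K) (x : L) (hk : k ≠ 0) :
    χ (w / (b * (algebraMap K L k * x))) = χ (w / (b * x)) := by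
  rw [← c.inv k _ hk]
  have k0' : algebraMap K L k ≠ 0 := by simpa using hk
  congr 1
  field_simp

lemma ηsw (c : Cfg K L q g θ χ) (w b : L) (x : L) :
    χ (w / (b * (g * x))) = - χ (w / (b * x)) := by
  rw [← neg_eq_iff_eq_neg, ← c.sw]
  congr 1
  have := c.g0
  field_simp

lemma sumχ (c : Cfg K L q g θ χ) (φ : AddChar K ℂ) (hφ : ∑ k, φ k = 0) (z : L) :
    ∑ x : L, χ x * φ (Algebra.trace K L (x * z)) = q * χ (θ / z) := by
  by_cases hz : z = 0
  · simp [hz, c.χ0, c.sumη χ c.sw]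
  · have h := c.key (fun x => χ (x / z)) (by simp [c.χ0])
      (fun k x hk => by rw [mul_div_assoc, c.inv k _ hk]) (fun x => by rw [mul_div_assoc, c.sw]) φ
    rw [← Equiv.sum_comp (Equiv.mulRight₀ z hz)] at h
    simp only [Equiv.mulRight₀_apply, hφ, AddChar.map_zero_eq_one,
      mul_div_cancel_right₀ _ hz] at h
    rw [Finset.sum_congr rfl (fun x _ => mul_comm _ _), h]
    ring

lemma sumχ2 (c : Cfg K L q g θ χ) (φ : AddChar K ℂ) (hφ : ∑ k, φ k = 0) [DecidableEq L] (z : L) :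
    ∑ x : L, χ x ^ 2 * φ (Algebra.trace K L (x * z)) = (if z = 0 then (q : ℂ) ^ 2 else 0) - 1 := by
  rw [← c.sumΨ φ hφ z, ← Finset.add_sum_erase _ _ (Finset.mem_univ (0 : L)),
    ← Finset.add_sum_erase _ _ (Finset.mem_univ (0 : L)), c.χ0,
    Finset.sum_congr rfl (g := fun x : L => φ (Algebra.trace K L (x * z)))]
  · simp
  · intro x hx
    rcases c.χ1 x (Finset.ne_of_mem_erase hx) with h | h <;> simp [h]

end Cfg

namespace Cfg

variable {K L : Type} [Field K] [Fintype K] [Field L] [Fintype L] [Algebra K L]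
    {q : ℕ} {g θ : L} {χ : L → ℂ}

lemma sumv0 (c : Cfg K L q g θ χ) (v : K → ℂ) (a b : L) (hb : b ≠ 0) :
    ∑ y : L, v (Algebra.trace K L y) * χ (θ / (a + b * y))
      = χ (1 / b) * (q * v (Algebra.trace K L (-a / b)) - ∑ k, v k) := by
  have h := c.key (fun x => χ (θ / (b * x))) (by simp [c.χ0])
      (fun k x hk => c.ηinv θ b k x hk) (fun x => c.ηsw θ b x)
      (fun s => v (Algebra.trace K L (-a / b) + s))
  have e : ∑ k, v (Algebra.trace K L (-a / b) + k) = ∑ k, v k :=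
    Equiv.sum_comp (Equiv.addLeft _) v
  have e2 : θ / (b * θ) = 1 / b := by
    have := c.θ0
    field_simp
  simp only [e, e2, add_zero] at h
  rw [← h, ← Equiv.sum_comp (Equiv.addLeft (-a / b))]
  apply Finset.sum_congr rfl
  intro x _
  simp only [Equiv.coe_addLeft, map_add]
  have e3 : a + b * (-a / b + x) = b * x := by field_simp; ring
  rw [e3]

lemma sumv1 (c : Cfg K L q g θ χ) (v : K → ℂ) (a b : L) (hb : b ≠ 0) :
    ∑ y : L, v (Algebra.trace K L (y * g)) * χ (θ / (a + b * y))
      = - (χ (1 / b) * (q * v (Algebra.trace K L (-a / b * g)) - ∑ k, v k)) := by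
  have h := c.sumv0 v (a * g) b hb
  have e : -(a * g) / b = -a / b * g := by ring
  rw [e] at h
  rw [← h, ← Equiv.sum_comp (Equiv.mulRight₀ g c.g0)
    (fun y => v (Algebra.trace K L y) * χ (θ / (a * g + b * y))), ← Finset.sum_neg_distrib]
  apply Finset.sum_congr rfl
  intro y _
  simp only [Equiv.mulRight₀_apply]
  have e3 : a * g + b * (y * g) = 1 * (g * (a + b * y)) := by ring
  rw [e3, c.ηsw]
  ring_nf

/-- the main weighted sum -/
def W (K : Type) {L : Type} [Field K] [Fintype K] [Field L] [Fintype L] [Algebra K L]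
    (g : L) (χ : L → ℂ) (v0 v1 : K → ℂ) (Φ : L → ℂ) (a b : L) : ℂ :=
  ∑ x : L, ∑ y : L, (v0 (Algebra.trace K L y) * (1 - v1 (Algebra.trace K L (y * g)))
      * ((χ x ^ 2 + χ x) / 2)
    + (1 - v0 (Algebra.trace K L y)) * v1 (Algebra.trace K L (y * g)) * ((χ x ^ 2 - χ x) / 2))
    * Φ (x * (a + b * y))

open scoped Classical in
lemma W_eq (c : Cfg K L q g θ χ) (φ : AddChar K ℂ) (hφ : ∑ k, φ k = 0) (v0 v1 : K → ℂ) (a b : L) :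
    W K g χ v0 v1 (fun x => φ (Algebra.trace K L x)) a b =
    ∑ y : L, ((v0 (Algebra.trace K L y) + v1 (Algebra.trace K L (y * g))
      - 2 * v0 (Algebra.trace K L y) * v1 (Algebra.trace K L (y * g)))
        * ((if a + b * y = 0 then (q : ℂ) ^ 2 else 0) - 1)
      + (v0 (Algebra.trace K L y) - v1 (Algebra.trace K L (y * g))) * (q * χ (θ / (a + b * y)))) / 2 := by
  unfold W
  rw [Finset.sum_comm]
  apply Finset.sum_congr rfl
  intro y _
  rw [← c.sumχ2 φ hφ (a + b * y), ← c.sumχ φ hφ (a + b * y), Finset.mul_sum, Finset.mul_sum,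
    ← Finset.sum_add_distrib, Finset.sum_div]
  apply Finset.sum_congr rfl
  intro x _
  ring

lemma sumA (c : Cfg K L q g θ χ) (v0 v1 : K → ℂ) :
    ∑ y : L, (v0 (Algebra.trace K L y) + v1 (Algebra.trace K L (y * g))
      - 2 * v0 (Algebra.trace K L y) * v1 (Algebra.trace K L (y * g)))
     = q * ∑ k, v0 k + q * ∑ k, v1 k - 2 * (∑ k, v0 k) * ∑ k, v1 k := by
  rw [c.sum2 (fun s t => v0 s + v1 t - 2 * v0 s * v1 t)]
  simp only [Finset.sum_sub_distrib, Finset.sum_add_distrib, Finset.sum_const, Finset.card_univ,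
    c.hK, nsmul_eq_mul, ← Finset.mul_sum, ← Finset.sum_mul]

lemma sumB (c : Cfg K L q g θ χ) (v0 v1 : K → ℂ) :
    ∑ y : L, (v0 (Algebra.trace K L y) - v1 (Algebra.trace K L (y * g)))
     = q * ∑ k, v0 k - q * ∑ k, v1 k := by
  rw [c.sum2 (fun s t => v0 s - v1 t)]
  simp only [Finset.sum_sub_distrib, Finset.sum_const, Finset.card_univ,
    c.hK, nsmul_eq_mul, ← Finset.mul_sum]

lemma W00 (c : Cfg K L q g θ χ) (φ : AddChar K ℂ) (hφ : ∑ k, φ k = 0) (v0 v1 : K → ℂ) :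
    W K g χ v0 v1 (fun x => φ (Algebra.trace K L x)) 0 0 =
    ((q : ℂ) ^ 2 - 1) * (q * ∑ k, v0 k + q * ∑ k, v1 k - 2 * (∑ k, v0 k) * ∑ k, v1 k) / 2 := by
  rw [c.W_eq φ hφ, ← c.sumA v0 v1, Finset.mul_sum, Finset.sum_div]
  apply Finset.sum_congr rfl
  intro y _
  simp [c.χ0]
  ring

lemma Wa0 (c : Cfg K L q g θ χ) (φ : AddChar K ℂ) (hφ : ∑ k, φ k = 0) (v0 v1 : K → ℂ)
    (a : L) (ha : a ≠ 0) :
    W K g χ v0 v1 (fun x => φ (Algebra.trace K L x)) a 0 =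
    (-(q * ∑ k, v0 k + q * ∑ k, v1 k - 2 * (∑ k, v0 k) * ∑ k, v1 k)
      + (q * ∑ k, v0 k - q * ∑ k, v1 k) * (q * χ (θ / a))) / 2 := by
  rw [c.W_eq φ hφ, ← c.sumA v0 v1, ← c.sumB v0 v1, ← Finset.sum_neg_distrib, Finset.sum_mul,
    ← Finset.sum_add_distrib, Finset.sum_div]
  apply Finset.sum_congr rfl
  intro y _
  simp [ha]

lemma Wab (c : Cfg K L q g θ χ) (φ : AddChar K ℂ) (hφ : ∑ k, φ k = 0) (v0 v1 : K → ℂ)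
    (a b : L) (hb : b ≠ 0) :
    W K g χ v0 v1 (fun x => φ (Algebra.trace K L x)) a b =
    (-(q * ∑ k, v0 k + q * ∑ k, v1 k - 2 * (∑ k, v0 k) * ∑ k, v1 k)
      + (q : ℂ) ^ 2 * (v0 (Algebra.trace K L (-a / b)) + v1 (Algebra.trace K L (-a / b * g))
      - 2 * v0 (Algebra.trace K L (-a / b)) * v1 (Algebra.trace K L (-a / b * g)))
      + q * χ (1 / b) * (q * v0 (Algebra.trace K L (-a / b)) + q * v1 (Algebra.trace K L (-a / b * g))
        - ∑ k, v0 k - ∑ k, v1 k)) / 2 := by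
  classical
  have h0 := c.sumv0 v0 a b hb
  have h1 := c.sumv1 v1 a b hb
  have h2 : ∑ y : L, (if y = -a / b then
      (q : ℂ) ^ 2 * (v0 (Algebra.trace K L y) + v1 (Algebra.trace K L (y * g))
      - 2 * v0 (Algebra.trace K L y) * v1 (Algebra.trace K L (y * g))) else 0) =
      (q : ℂ) ^ 2 * (v0 (Algebra.trace K L (-a / b)) + v1 (Algebra.trace K L (-a / b * g))
      - 2 * v0 (Algebra.trace K L (-a / b)) * v1 (Algebra.trace K L (-a / b * g))) := by
    rw [Finset.sum_ite_eq' Finset.univ (-a / b)]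
    simp
  have e : ∀ X Y : ℂ, q * χ (1 / b) * (q * v0 (Algebra.trace K L (-a / b)) +
      q * v1 (Algebra.trace K L (-a / b * g)) - X - Y)
    = q * (χ (1 / b) * (q * v0 (Algebra.trace K L (-a / b)) - X)) -
      q * (-(χ (1 / b) * (q * v1 (Algebra.trace K L (-a / b * g)) - Y))) := by
    intros; ring
  rw [e, ← h0, ← h1, ← h2, ← c.sumA v0 v1, c.W_eq φ hφ, ← Finset.sum_neg_distrib, Finset.mul_sum,
    Finset.mul_sum, ← Finset.sum_sub_distrib,
    ← Finset.sum_add_distrib, ← Finset.sum_add_distrib, Finset.sum_div]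
  apply Finset.sum_congr rfl
  intro y _
  have e3 : a + b * y = 0 ↔ y = -a / b := by
    rw [eq_div_iff hb]
    constructor
    · intro h; linear_combination h
    · intro h; linear_combination h
  simp only [e3]
  split_ifs <;> ring

end Cfg

open scoped Classical in
lemma setsum {L : Type} [Field L] [Fintype L] (E : Set (L × L)) (G : L × L → ℂ) :
    ∑ᶠ z ∈ E, G z = ∑ x : L, ∑ y : L, (if x ≠ 0 ∧ (x, x * y) ∈ E then G (x, x * y) else 0)
      + ∑ w : L, (if ((0 : L), w) ∈ E then G (0, w) else 0) := by
  have h : ∑ᶠ z ∈ E, G z = ∑ z : L × L, if z ∈ E then G z else 0 := by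
    rw [finsum_eq_sum_of_fintype]
    apply Finset.sum_congr rfl
    intro z _
    rw [finsum_eq_if]
  rw [h, Fintype.sum_prod_type, ← Finset.add_sum_erase _ _ (Finset.mem_univ (0 : L)), add_comm]
  congr 1
  rw [← Finset.add_sum_erase Finset.univ (fun x => ∑ y : L, (if x ≠ 0 ∧ (x, x * y) ∈ E then G (x, x * y) else 0)) (Finset.mem_univ (0 : L))]
  simp only [ne_eq, not_true_eq_false, false_and, if_false, Finset.sum_const_zero, zero_add]
  apply Finset.sum_congr rfl
  intro x hx
  have hx0 := Finset.ne_of_mem_erase hx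
  rw [← Equiv.sum_comp (Equiv.mulLeft₀ x hx0)]
  apply Finset.sum_congr rfl
  intro y _
  simp [hx0]

lemma ncard_sum {L : Type} [Field L] [Fintype L] (E : Set (L × L)) :
    (E.ncard : ℂ) = ∑ᶠ z ∈ E, (1 : ℂ) := by
  classical
  rw [finsum_mem_eq_toFinset_sum, Set.ncard_eq_toFinset_card']
  simp

open scoped Classical in
/-- indicator of a set -/
def indT {K : Type} (T : Set K) (k : K) : ℂ := if k ∈ T then 1 else 0

lemma sum_indT {K : Type} [Fintype K] (T : Set K) : ∑ k, indT T k = T.ncard := by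
  classical
  rw [Set.ncard_eq_toFinset_card']
  unfold indT
  rw [Finset.sum_boole]
  congr 2
  ext k
  rw [Finset.mem_filter, Set.mem_toFinset]
  exact ⟨fun h => h.2, fun h => ⟨Finset.mem_univ _, h⟩⟩

/-- shape of the sets -/
structure Shape {K L : Type} [Field K] [Fintype K] [Field L] [Fintype L] [Algebra K L]
    (g : L) (χ : L → ℂ) (T0 T1 : Set K) (I : Set L) (E : Set (L × L)) : Prop where
  h1 : ∀ x y : L, x ≠ 0 → ((x, x * y) ∈ E ↔
    (χ x = 1 ∧ Algebra.trace K L y ∈ T0 ∧ Algebra.trace K L (y * g) ∉ T1) ∨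
    (χ x = -1 ∧ Algebra.trace K L y ∉ T0 ∧ Algebra.trace K L (y * g) ∈ T1))
  h0 : ∀ w : L, ((0 : L), w) ∈ E ↔ w ∈ I

open scoped Classical in
lemma Shape.sum {K L : Type} [Field K] [Fintype K] [Field L] [Fintype L] [Algebra K L]
    {q : ℕ} {g θ : L} {χ : L → ℂ} (c : Cfg K L q g θ χ) {T0 T1 : Set K} {I : Set L}
    {E : Set (L × L)} (s : Shape g χ T0 T1 I E) (Φ : L → ℂ) (a b : L) :
    ∑ᶠ z ∈ E, Φ (a * z.1 + b * z.2) = Cfg.W K g χ (indT T0) (indT T1) Φ a b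
      + ∑ w : L, if w ∈ I then Φ (b * w) else 0 := by
  rw [setsum]
  congr 1
  · unfold Cfg.W
    apply Finset.sum_congr rfl
    intro x _
    apply Finset.sum_congr rfl
    intro y _
    have e : a * x + b * (x * y) = x * (a + b * y) := by ring
    by_cases hx : x = 0
    · simp [hx, c.χ0]
    · have n1 : ¬ ((1 : ℂ) = -1) := by norm_num
      have n2 : ¬ ((-1 : ℂ) = 1) := by norm_num
      simp only [s.h1 x y hx, e, indT]
      rcases c.χ1 x hx with h | h <;>
      by_cases t0 : Algebra.trace K L y ∈ T0 <;>
      by_cases t1 : Algebra.trace K L (y * g) ∈ T1 <;>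
      simp [h, t0, t1, hx, n1, n2]
  · apply Finset.sum_congr rfl
    intro w _
    simp only [s.h0 w]
    simp

lemma indT_cases {K : Type} (T : Set K) (k : K) : indT T k = 0 ∨ indT T k = 1 := by
  unfold indT
  split_ifs <;> simp

open scoped Classical in
lemma Cfg.sumI {K L : Type} [Field K] [Fintype K] [Field L] [Fintype L] [Algebra K L]
    {q : ℕ} {g θ : L} {χ : L → ℂ} (c : Cfg K L q g θ χ) (φ : AddChar K ℂ) (hφ : ∑ k, φ k = 0)
    (I : Set L) (hI : ∀ w, θ * w ∈ I ↔ χ w = -1) (b : L) :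
    (∑ w : L, if w ∈ I then φ (Algebra.trace K L (b * w)) else 0) =
      ((if b = 0 then (q : ℂ) ^ 2 else 0) - 1 - q * χ (1 / b)) / 2 := by
  have e1 : b = 0 ↔ b * θ = 0 := by simp [c.θ0]
  have e2 : 1 / b = θ / (b * θ) := by
    have := c.θ0
    by_cases hb : b = 0
    · simp [hb]
    · field_simp
  rw [← Equiv.sum_comp (Equiv.mulLeft₀ θ c.θ0), e2, ← c.sumχ φ hφ]
  simp only [e1]
  rw [← c.sumχ2 φ hφ, ← Finset.sum_sub_distrib, Finset.sum_div]
  apply Finset.sum_congr rfl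
  intro w _
  simp only [Equiv.mulLeft₀_apply, hI]
  have e3 : b * (θ * w) = w * (b * θ) := by ring
  rw [e3]
  by_cases hw : w = 0
  · simp [hw, c.χ0]
  · have n1 : ¬ ((1 : ℂ) = -1) := by norm_num
    rcases c.χ1 w hw with h | h <;> simp [h, n1]

lemma card_of {q N : ℕ} (h : (N : ℂ) = ((q : ℂ) ^ 4 - 1) / 4) : N = (q ^ 4 - 1) / 4 := by
  have : 4 * N + 1 = q ^ 4 := by
    have h' : ((4 * N + 1 : ℕ) : ℂ) = ((q ^ 4 : ℕ) : ℂ) := by push_cast; rw [h]; ring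
    exact_mod_cast h'
  omega

lemma typeQ_A {p q : ℕ} {K L : Type} [Field K] [Fintype K] [Field L] [Fintype L] [Algebra K L]
    [CharP L p]
    {g θ : L} {χ : L → ℂ} (c : Cfg K L q g θ χ) (φ : AddChar K ℂ) (hφ : ∑ k, φ k = 0)
    (hψ : ∀ x : L, psiL p L x = φ (Algebra.trace K L x))
    {T0 T1 : Set K} (h0 : 2 * T0.ncard + 1 = q) (h1 : 2 * T1.ncard + 1 = q)
    {I : Set L} (hI : ∀ w, θ * w ∈ I ↔ χ w = -1)
    {E : Set (L × L)} (s : Shape g χ T0 T1 I E) : IsTypeQ p q L E := by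
  classical
  have n0 : (T0.ncard : ℂ) = (q - 1) / 2 := by rw [← h0]; push_cast; ring
  have n1 : (T1.ncard : ℂ) = (q - 1) / 2 := by rw [← h1]; push_cast; ring
  constructor
  · apply card_of
    have h := s.sum c (fun x => φ (Algebra.trace K L x)) 0 0
    simp only [c.W00 φ hφ, c.sumI φ hφ I hI, sum_indT, n0, n1] at h
    simp only [zero_mul, add_zero, map_zero, AddChar.map_zero_eq_one, ← ncard_sum] at h
    rw [h]
    simp [c.χ0]
    ring
  · intro a b hab
    unfold psiSum
    simp only [hψ]
    rw [s.sum c (fun x => φ (Algebra.trace K L x)) a b, c.sumI φ hφ I hI]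
    by_cases hb : b = 0
    · subst hb
      have ha : a ≠ 0 := by rintro rfl; exact hab rfl
      rw [c.Wa0 φ hφ _ _ a ha]
      simp only [sum_indT, n0, n1]
      left
      simp [c.χ0]
      ring
    · rw [c.Wab φ hφ _ _ a b hb]
      simp only [sum_indT, n0, n1, hb, if_false]
      rcases c.χ1 (1 / b) (by simpa using hb) with h | h <;>
      rcases indT_cases T0 (Algebra.trace K L (-a / b)) with h2 | h2 <;>
      rcases indT_cases T1 (Algebra.trace K L (-a / b * g)) with h3 | h3 <;>
      rw [h, h2, h3] <;> first | (left; ring1) | (right; ring1)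

lemma typeQ_B {p q : ℕ} {K L : Type} [Field K] [Fintype K] [Field L] [Fintype L] [Algebra K L]
    [CharP L p]
    {g θ : L} {χ : L → ℂ} (c : Cfg K L q g θ χ) (φ : AddChar K ℂ) (hφ : ∑ k, φ k = 0)
    (hψ : ∀ x : L, psiL p L x = φ (Algebra.trace K L x))
    {T0 T1 : Set K} (h0 : 2 * T0.ncard + 1 = q) (h1 : 2 * T1.ncard = q + 1)
    {E : Set (L × L)} (s : Shape g χ T0 T1 ∅ E) : IsTypeQ p q L E := by
  classical
  have n0 : (T0.ncard : ℂ) = (q - 1) / 2 := by rw [← h0]; push_cast; ring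
  have n1 : (T1.ncard : ℂ) = (q + 1) / 2 := by
    have : ((2 * T1.ncard : ℕ) : ℂ) = ((q + 1 : ℕ) : ℂ) := by rw [h1]
    push_cast at this
    rw [← this]; ring
  constructor
  · apply card_of
    have h := s.sum c (fun x => φ (Algebra.trace K L x)) 0 0
    simp only [c.W00 φ hφ, sum_indT, n0, n1] at h
    simp only [zero_mul, add_zero, map_zero, AddChar.map_zero_eq_one, ← ncard_sum] at h
    rw [h]
    simp
    ring
  · intro a b hab
    unfold psiSum
    simp only [hψ]
    rw [s.sum c (fun x => φ (Algebra.trace K L x)) a b]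
    simp only [Set.mem_empty_iff_false, if_false, Finset.sum_const_zero, add_zero]
    by_cases hb : b = 0
    · subst hb
      have ha : a ≠ 0 := by rintro rfl; exact hab rfl
      rw [c.Wa0 φ hφ _ _ a ha]
      simp only [sum_indT, n0, n1]
      rcases c.χ1 (θ / a) (div_ne_zero c.θ0 ha) with h | h <;>
      rw [h] <;> first | (left; ring1) | (right; ring1)
    · rw [c.Wab φ hφ _ _ a b hb]
      simp only [sum_indT, n0, n1]
      rcases c.χ1 (1 / b) (by simpa using hb) with h | h <;>
      rcases indT_cases T0 (Algebra.trace K L (-a / b)) with h2 | h2 <;>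
      rcases indT_cases T1 (Algebra.trace K L (-a / b * g)) with h3 | h3 <;>
      rw [h, h2, h3] <;> first | (left; ring1) | (right; ring1)

lemma exists_phi {p : ℕ} (hp : p.Prime) (K L : Type) [Field K] [Fintype K] [Field L] [Fintype L]
    [Algebra K L] [CharP L p] : ∃ φ : AddChar K ℂ, ∑ k, φ k = 0 ∧
      ∀ x : L, psiL p L x = φ (Algebra.trace K L x) := by
  have : Fact p.Prime := ⟨hp⟩
  have : NeZero p := ⟨hp.ne_zero⟩
  have : CharP K p := (RingHom.charP_iff (algebraMap K L) (algebraMap K L).injective p).2 inferInstance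
  let _ : Algebra (ZMod p) L := ZMod.algebra L p
  let _ : Algebra (ZMod p) K := ZMod.algebra K p
  have : IsScalarTower (ZMod p) K L := IsScalarTower.of_algebraMap_eq' (Subsingleton.elim _ _)
  have : Module.Finite (ZMod p) K := Module.Finite.of_finite
  have : Module.Finite (ZMod p) L := Module.Finite.of_finite
  have : Module.Finite K L := Module.Finite.of_finite
  refine ⟨(ZMod.stdAddChar (N := p)).compAddMonoidHom
    ((Algebra.trace (ZMod p) K).toAddMonoidHom), ?_, ?_⟩
  · apply AddChar.sum_eq_zero_of_ne_one
    intro h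
    obtain ⟨k, hk⟩ := Algebra.trace_surjective (ZMod p) K 1
    have h1 := DFunLike.congr_fun h k
    rw [AddChar.compAddMonoidHom_apply, AddChar.one_apply] at h1
    change ZMod.stdAddChar ((Algebra.trace (ZMod p) K) k) = 1 at h1
    rw [hk] at h1
    have h2 : ZMod.stdAddChar (N := p) 1 = ZMod.stdAddChar (N := p) 0 := by
      rw [h1, AddChar.map_zero_eq_one]
    exact one_ne_zero (ZMod.injective_stdAddChar h2)
  · intro x
    rw [AddChar.compAddMonoidHom_apply]
    change _ = ZMod.stdAddChar ((Algebra.trace (ZMod p) K) (Algebra.trace K L x))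
    rw [Algebra.trace_trace]
    change zetaP p ^ (Algebra.trace (ZMod p) L x).val = _
    generalize Algebra.trace (ZMod p) L x = u
    conv_rhs => rw [← ZMod.natCast_zmod_val u]
    have := ZMod.stdAddChar_coe (N := p) (u.val : ℤ)
    rw [Int.cast_natCast] at this
    rw [this, zetaP, ← Complex.exp_nat_mul]
    congr 1
    push_cast
    ring

lemma eps_parity {p s q m l t : ℕ} (hpo : Odd p) (hq : q = p ^ s) (hm : 0 < m)
    (hdvd : 2 * m ∣ q + 1) (hldvd : 2 * m ∣ p ^ l + 1) (ht : s = l * t) :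
    (Even ((p ^ l + 1) / (2 * m)) ∧ Odd t) ↔ Even ((q + 1) / (2 * m)) := by
  obtain ⟨r, hr⟩ := hdvd
  obtain ⟨r0, hr0⟩ := hldvd
  rw [hr, hr0, Nat.mul_div_cancel_left _ (by omega), Nat.mul_div_cancel_left _ (by omega)]
  set P := p ^ l with hP
  have hqP : q = P ^ t := by rw [hq, ht, pow_mul]
  have hPo : Odd P := hpo.pow
  obtain ⟨a, ha⟩ := hPo
  have hsq : (P : ℤ) ^ 2 ≡ 1 [ZMOD 4 * m] := by
    apply Int.ModEq.symm
    rw [Int.modEq_iff_dvd]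
    refine ⟨a * r0, ?_⟩
    have e1 : (P : ℤ) + 1 = 2 * m * r0 := by exact_mod_cast hr0
    have e2 : (P : ℤ) = 2 * a + 1 := by exact_mod_cast ha
    have : (P : ℤ) ^ 2 - 1 = (P - 1) * (P + 1) := by ring
    rw [this, e1, e2]
    ring
  have e1 : (P : ℤ) + 1 = 2 * m * r0 := by exact_mod_cast hr0
  have e3 : (q : ℤ) + 1 = 2 * m * r := by exact_mod_cast hr
  have e4 : (q : ℤ) = (P : ℤ) ^ t := by exact_mod_cast hqP
  have hm' : (m : ℤ) ≠ 0 := by exact_mod_cast hm.ne'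
  rcases Nat.even_or_odd t with hte | hto
  · obtain ⟨u, hu⟩ := hte
    have : (P : ℤ) ^ t ≡ 1 [ZMOD 4 * m] := by
      rw [hu, ← two_mul, pow_mul]
      simpa using hsq.pow u
    rw [← e4] at this
    obtain ⟨d, hd⟩ := (Int.modEq_iff_dvd).1 this
    have h5 : (m : ℤ) * r = 1 - 2 * (m * d) := by linarith
    have hnt : ¬ Odd t := by rw [Nat.not_odd_iff_even]; exact ⟨u, hu⟩
    constructor
    · intro h; exact absurd h.2 hnt
    · rintro ⟨w, hw⟩
      exfalso
      have h6 : (r : ℤ) = w + w := by exact_mod_cast hw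
      rw [h6] at h5
      have : (m : ℤ) * (w + w) = 2 * (m * w) := by ring
      omega
  · obtain ⟨u, hu⟩ := hto
    have : (P : ℤ) ^ t ≡ P [ZMOD 4 * m] := by
      rw [hu, pow_succ, pow_mul]
      simpa using (hsq.pow u).mul_right (P : ℤ)
    rw [← e4] at this
    obtain ⟨d, hd⟩ := (Int.modEq_iff_dvd).1 this
    have h5 : (2 * m : ℤ) * (r0 - r) = (2 * m) * (2 * d) := by linarith
    have h6 := mul_left_cancel₀ (by positivity) h5
    have hot : Odd t := ⟨u, hu⟩
    simp only [hot, and_true]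
    rw [Nat.even_iff, Nat.even_iff]
    omega

lemma prim_ne_zero {L : Type} [Field L] [Fintype L] {q : ℕ} (hq : 3 ≤ q)
    (hL : Fintype.card L = q ^ 2) {ω : L} (hω : IsPrim L ω) : ω ≠ 0 := by
  classical
  rintro rfl
  have h : (Finset.univ : Finset L) ⊆ {0, 1} := by
    intro x _
    by_cases hx : x = 0
    · simp [hx]
    · obtain ⟨n, hn⟩ := hω x hx
      rcases Nat.eq_zero_or_pos n with h | h
      · subst h; simp [hn]
      · rw [zero_pow h.ne'] at hn; exact absurd hn hx
  have h1 := (Finset.card_le_card h).trans Finset.card_le_two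
  rw [Finset.card_univ, hL] at h1
  nlinarith

lemma prim_pow {L : Type} [Field L] [Fintype L] {q : ℕ} (hq : 3 ≤ q)
    (hL : Fintype.card L = q ^ 2) {ω : L} (hω : IsPrim L ω) (n k : ℕ) :
    ω ^ n = ω ^ k ↔ n ≡ k [MOD q ^ 2 - 1] := by
  classical
  have h0 := prim_ne_zero hq hL hω
  let u : Lˣ := Units.mk0 ω h0
  have hu : ∀ x : Lˣ, x ∈ Subgroup.zpowers u := by
    intro x
    obtain ⟨n, hn⟩ := hω x x.ne_zero
    refine ⟨n, ?_⟩
    ext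
    simp [u, hn]
  have ho := orderOf_eq_card_of_forall_mem_zpowers hu
  rw [Nat.card_eq_fintype_card, Fintype.card_units, hL] at ho
  rw [← ho, ← pow_eq_pow_iff_modEq, Units.ext_iff]
  simp [u]

lemma cyc_mem {L : Type} [Field L] [Fintype L] {q : ℕ} (hq : 3 ≤ q)
    (hL : Fintype.card L = q ^ 2) {ω : L} (hω : IsPrim L ω) {N : ℕ}
    (hN : N ∣ q ^ 2 - 1) (n i : ℕ) : ω ^ n ∈ cyc L ω N i ↔ n ≡ i [MOD N] := by
  have hQ : 1 ≤ q ^ 2 - 1 := by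
    have : 9 ≤ q ^ 2 := by nlinarith
    omega
  constructor
  · rintro ⟨k, hk⟩
    rw [← pow_mul, ← pow_add, prim_pow hq hL hω] at hk
    have h := hk.of_dvd hN
    refine h.trans ?_
    simp [Nat.ModEq]
  · intro h
    have h1 : n + (q ^ 2 - 1) * i ≡ i [MOD N] := by
      obtain ⟨d, hd⟩ := hN
      rw [hd, mul_assoc]
      refine Nat.ModEq.trans ?_ h
      simp [Nat.ModEq]
    have hle : i ≤ n + (q ^ 2 - 1) * i := by nlinarith
    obtain ⟨k, hk⟩ := (Nat.modEq_iff_dvd' hle).1 h1.symm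
    refine ⟨k, ?_⟩
    rw [← pow_mul, ← pow_add, prim_pow hq hL hω, ← hk, Nat.add_sub_cancel' hle]
    simp [Nat.ModEq]

lemma cyc_zero {L : Type} [Field L] {ω : L} (h : ω ≠ 0) (N i : ℕ) : (0 : L) ∉ cyc L ω N i := by
  rintro ⟨k, hk⟩
  exact (mul_ne_zero (pow_ne_zero _ h) (pow_ne_zero _ (pow_ne_zero _ h))) hk.symm

lemma Kst_xor {m : ℕ} (hm : 0 < m) (Kst : Finset ℕ) (hKsub : ∀ k ∈ Kst, k < 2 * m)
    (hKcard : Kst.card = m) (hKdisj : ∀ k ∈ Kst, (k + m) % (2 * m) ∉ Kst) (n : ℕ) :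
    (n + m) % (2 * m) ∈ Kst ↔ ¬ n % (2 * m) ∈ Kst := by
  have sh : ∀ k, (((k + m) % (2 * m)) + m) % (2 * m) = k % (2 * m) := by
    intro k
    rw [Nat.mod_add_mod, add_assoc, ← two_mul, Nat.add_mod_right]
  constructor
  · intro h h'
    have := hKdisj _ h'
    rw [Nat.mod_add_mod] at this
    exact this h
  · intro h
    have hinj : Set.InjOn (fun k => (k + m) % (2 * m)) (Kst : Set ℕ) := by
      intro a ha b hb hab
      have h1 := sh a
      have h2 := sh b
      simp only at hab
      rw [hab, h2, Nat.mod_eq_of_lt (hKsub a ha), Nat.mod_eq_of_lt (hKsub b hb)] at h1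
      exact h1.symm
    have hdis : Disjoint Kst (Kst.image (fun k => (k + m) % (2 * m))) := by
      rw [Finset.disjoint_left]
      intro a ha hb
      obtain ⟨k, hk, rfl⟩ := Finset.mem_image.1 hb
      exact hKdisj k hk ha
    have hcard : (Kst ∪ Kst.image (fun k => (k + m) % (2 * m))).card = 2 * m := by
      rw [Finset.card_union_of_disjoint hdis, Finset.card_image_of_injOn hinj, hKcard, two_mul]
    have hsub : Kst ∪ Kst.image (fun k => (k + m) % (2 * m)) ⊆ Finset.range (2 * m) := by
      intro a ha
      rw [Finset.mem_range]
      rcases Finset.mem_union.1 ha with h | h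
      · exact hKsub a h
      · obtain ⟨k, hk, rfl⟩ := Finset.mem_image.1 h
        exact Nat.mod_lt _ (by omega)
    have heq := Finset.eq_of_subset_of_card_le hsub (by rw [hcard, Finset.card_range])
    have hr : n % (2 * m) ∈ Kst ∪ Kst.image (fun k => (k + m) % (2 * m)) := by
      rw [heq, Finset.mem_range]
      exact Nat.mod_lt _ (by omega)
    rcases Finset.mem_union.1 hr with h' | h'
    · exact absurd h' h
    · obtain ⟨k, hk, hkn⟩ := Finset.mem_image.1 h'
      have := sh k
      rw [hkn, Nat.mod_add_mod, Nat.mod_eq_of_lt (hKsub k hk)] at this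
      rw [this]
      exact hk

lemma trace_theta {K L : Type} [Field K] [Fintype K] [Field L] [Fintype L] [Algebra K L]
    {q : ℕ} (hq : 3 ≤ q) (hqo : Odd q) (hK : Fintype.card K = q)
    (hL : Fintype.card L = q ^ 2) {ω : L} (hω : IsPrim L ω) :
    Algebra.trace K L (ω ^ ((q + 1) / 2)) = 0 := by
  have hfr : Module.finrank K L = 2 := by
    have h := Module.card_eq_pow_finrank (K := K) (V := L)
    rw [hK, hL] at h
    exact (Nat.pow_right_injective (by omega : 2 ≤ q) h).symm
  apply (algebraMap K L).injective
  rw [FiniteField.algebraMap_trace_eq_sum_pow, hfr, Nat.card_eq_fintype_card, hK, map_zero]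
  simp only [Finset.sum_range_succ, Finset.sum_range_zero, pow_zero, pow_one, zero_add]
  obtain ⟨a, ha⟩ := hqo
  have e : (q + 1) / 2 = a + 1 := by omega
  rw [e, ← pow_mul]
  have h0 := prim_ne_zero hq hL hω
  have e2 : (a + 1) * q = (a + 1) + (a + 1) * (2 * a) := by rw [ha]; ring
  rw [e2, pow_add ω (a + 1) ((a + 1) * (2 * a))]
  have hQ : q ^ 2 - 1 = 2 * ((a + 1) * (2 * a)) := by
    rw [ha]
    have : (2 * a + 1) ^ 2 = 2 * ((a + 1) * (2 * a)) + 1 := by ring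
    omega
  have hsq : (ω ^ ((a + 1) * (2 * a))) ^ 2 = 1 := by
    rw [← pow_mul, mul_comm _ 2, ← hQ, ← pow_zero ω, prim_pow hq hL hω]
    simp [Nat.ModEq]
  have hne : ω ^ ((a + 1) * (2 * a)) ≠ 1 := by
    rw [← pow_zero ω, Ne, prim_pow hq hL hω, hQ, Nat.ModEq.comm, Nat.modEq_iff_dvd' (Nat.zero_le _)]
    intro h
    have hpos : 0 < (a + 1) * (2 * a) := by
      have : 0 < a := by omega
      positivity
    have := Nat.le_of_dvd (by omega) h
    omega
  rcases (mul_self_eq_one_iff.1 ((sq _).symm.trans hsq)) with h | h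
  · exact absurd h hne
  · rw [h]; ring

lemma K_exp {K L : Type} [Field K] [Fintype K] [Field L] [Fintype L] [Algebra K L]
    {q : ℕ} (hq : 3 ≤ q) (hK : Fintype.card K = q)
    (hL : Fintype.card L = q ^ 2) {ω : L} (hω : IsPrim L ω) (k : K) (hk : k ≠ 0) :
    ∃ j, algebraMap K L k = ω ^ ((q + 1) * j) := by
  obtain ⟨n, hn⟩ := hω (algebraMap K L k) (by simpa using hk)
  have h1 : ω ^ (n * (q - 1)) = ω ^ 0 := by
    rw [pow_mul, ← hn, ← map_pow, ← hK, FiniteField.pow_card_sub_one_eq_one k hk, map_one, pow_zero]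
  rw [prim_pow hq hL hω, Nat.ModEq.comm, Nat.modEq_iff_dvd' (Nat.zero_le _), Nat.sub_zero] at h1
  have e : q ^ 2 - 1 = (q + 1) * (q - 1) := by
    have := Nat.sq_sub_sq q 1
    simpa using this
  rw [e] at h1
  obtain ⟨j, hj⟩ := Nat.dvd_of_mul_dvd_mul_right (by omega) h1
  exact ⟨j, by rw [hn, hj]⟩

open scoped Classical in
/-- the sign function -/
def sgnD {L : Type} (D₀ D₁ : Set L) (x : L) : ℂ := if x ∈ D₀ then 1 else if x ∈ D₁ then -1 else 0

/-- combinatorial facts on D₀ and D₁ -/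
structure DFacts {L : Type} [Field L] (ω : L) (m : ℕ) (D₀ D₁ : Set L) : Prop where
  z0 : (0 : L) ∉ D₀
  z1 : (0 : L) ∉ D₁
  per : ∀ n j, ω ^ (n + 2 * m * j) ∈ D₀ ↔ ω ^ n ∈ D₀
  sh : ∀ n, ω ^ (n + m) ∈ D₀ ↔ ω ^ n ∈ D₁
  comp : ∀ n, ω ^ n ∈ D₁ ↔ ω ^ n ∉ D₀

lemma mkDFacts {L : Type} [Field L] [Fintype L] {q : ℕ} (hq : 3 ≤ q)
    (hL : Fintype.card L = q ^ 2) {ω : L} (hω : IsPrim L ω) {m : ℕ} (hm : 0 < m)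
    (hdvd : 2 * m ∣ q + 1) (Kst : Finset ℕ) (hKsub : ∀ k ∈ Kst, k < 2 * m)
    (hKcard : Kst.card = m) (hKdisj : ∀ k ∈ Kst, (k + m) % (2 * m) ∉ Kst)
    (D₀ D₁ : Set L)
    (hD₀ : D₀ = ⋃ i ∈ Kst, cyc L ω (2 * m) i)
    (hD₁ : D₁ = ⋃ i ∈ Kst, cyc L ω (2 * m) (i + m)) : DFacts ω m D₀ D₁ := by
  have h0 := prim_ne_zero hq hL hω
  have hN : 2 * m ∣ q ^ 2 - 1 := by
    have e : q ^ 2 - 1 = (q + 1) * (q - 1) := by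
      have := Nat.sq_sub_sq q 1
      simpa using this
    rw [e]
    exact hdvd.mul_right _
  have d0 : ∀ n, ω ^ n ∈ D₀ ↔ n % (2 * m) ∈ Kst := by
    intro n
    rw [hD₀]
    simp only [Set.mem_iUnion, cyc_mem hq hL hω hN, exists_prop]
    constructor
    · rintro ⟨i, hi, h⟩
      have h' : n % (2 * m) = i % (2 * m) := h
      rw [h', Nat.mod_eq_of_lt (hKsub i hi)]
      exact hi
    · intro h
      exact ⟨_, h, (Nat.mod_modEq _ _).symm⟩
  have d1 : ∀ n, ω ^ n ∈ D₁ ↔ (n + m) % (2 * m) ∈ Kst := by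
    intro n
    rw [hD₁]
    simp only [Set.mem_iUnion, cyc_mem hq hL hω hN, exists_prop]
    constructor
    · rintro ⟨i, hi, h⟩
      have h' : (n + m) % (2 * m) = (i + m + m) % (2 * m) := h.add_right m
      rw [h', add_assoc, ← two_mul, Nat.add_mod_right, Nat.mod_eq_of_lt (hKsub i hi)]
      exact hi
    · intro h
      refine ⟨_, h, ?_⟩
      unfold Nat.ModEq
      rw [Nat.mod_add_mod, add_assoc, ← two_mul, Nat.add_mod_right]
  refine ⟨?_, ?_, ?_, ?_, ?_⟩
  · rw [hD₀]
    simp only [Set.mem_iUnion, not_exists]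
    intro i _
    exact cyc_zero h0 _ _
  · rw [hD₁]
    simp only [Set.mem_iUnion, not_exists]
    intro i _
    exact cyc_zero h0 _ _
  · intro n j
    rw [d0, d0, Nat.add_mul_mod_self_left]
  · intro n
    rw [d0, d1]
  · intro n
    rw [d0, d1, Kst_xor hm Kst hKsub hKcard hKdisj]

section
variable {L : Type} [Field L] {ω : L} {m : ℕ} {D₀ D₁ : Set L}

lemma DFacts.disj (d : DFacts ω m D₀ D₁) (hω : IsPrim L ω) (x : L) (hx : x ≠ 0) :
    x ∈ D₁ ↔ x ∉ D₀ := by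
  obtain ⟨n, rfl⟩ := hω x hx
  exact d.comp n

lemma DFacts.one (x : L) : sgnD D₀ D₁ x = 1 ↔ x ∈ D₀ := by
  unfold sgnD
  split_ifs with h1 h2
  · simp [h1]
  · simp only [h1, iff_false]; norm_num
  · simp [h1]

lemma DFacts.negone (d : DFacts ω m D₀ D₁) (hω : IsPrim L ω) (x : L) :
    sgnD D₀ D₁ x = -1 ↔ x ∈ D₁ := by
  by_cases hx : x = 0
  · subst hx
    simp [sgnD, d.z0, d.z1]
  · have := d.disj hω x hx
    unfold sgnD
    split_ifs with h1 h2
    · simp only [this, h1, not_true_eq_false, iff_false]; norm_num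
    · simp [h2]
    · exact absurd (this.2 h1) h2

lemma DFacts.cfg {K : Type} [Field K] [Fintype K] [Fintype L] [Algebra K L]
    (d : DFacts ω m D₀ D₁) {q : ℕ} (hq : 3 ≤ q) (hqo : Odd q) (hK : Fintype.card K = q)
    (hL : Fintype.card L = q ^ 2) (hω : IsPrim L ω) (hdvd : 2 * m ∣ q + 1) :
    Cfg K L q (ω ^ m) (ω ^ ((q + 1) / 2)) (sgnD D₀ D₁) where
  hK := hK
  hL := hL
  θ0 := pow_ne_zero _ (prim_ne_zero hq hL hω)
  trθ := trace_theta hq hqo hK hL hω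
  χ0 := by simp [sgnD, d.z0, d.z1]
  χ1 := by
    intro x hx
    rw [DFacts.one, d.negone hω, d.disj hω x hx]
    exact em _
  inv := by
    intro k x hk
    by_cases hx : x = 0
    · simp [hx]
    obtain ⟨n, rfl⟩ := hω x hx
    obtain ⟨j, hj⟩ := K_exp hq hK hL hω k hk
    obtain ⟨r, hr⟩ := hdvd
    rw [hj, ← pow_add, hr, add_comm, mul_assoc (2 * m)]
    have p1 := d.per n (r * j)
    have p2 := d.comp n
    have p3 := d.comp (n + 2 * m * (r * j))
    by_cases h : ω ^ n ∈ D₀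
    · rw [(DFacts.one _).2 h, (DFacts.one _).2 (p1.2 h)]
    · rw [(d.negone hω _).2 (p2.2 h), (d.negone hω _).2 (p3.2 (mt p1.1 h))]
  sw := by
    intro x
    by_cases hx : x = 0
    · simp [hx, sgnD, d.z0, d.z1]
    obtain ⟨n, rfl⟩ := hω x hx
    rw [← pow_add, add_comm]
    have p1 := d.sh n
    have p2 := d.comp n
    have p3 := d.comp (n + m)
    by_cases h : ω ^ n ∈ D₀
    · rw [(DFacts.one _).2 h, (d.negone hω _).2 (p3.2 (fun h' => p2.1 (p1.1 h') h))]
    · rw [(d.negone hω _).2 (p2.2 h), (DFacts.one _).2 (p1.2 (p2.2 h)), neg_neg]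

lemma DFacts.theta [Fintype L]
    (d : DFacts ω m D₀ D₁) {q : ℕ} (hq : 3 ≤ q)
    (hL : Fintype.card L = q ^ 2) (hω : IsPrim L ω) (hdvd : 2 * m ∣ q + 1) (hm : 0 < m) (w : L) :
    (Even ((q + 1) / (2 * m)) → (ω ^ ((q + 1) / 2) * w ∈ D₁ ↔ w ∈ D₁) ∧
      (ω ^ ((q + 1) / 2) * w ∈ D₀ ↔ w ∈ D₀)) ∧
    (¬ Even ((q + 1) / (2 * m)) → (ω ^ ((q + 1) / 2) * w ∈ D₀ ↔ w ∈ D₁) ∧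
      (ω ^ ((q + 1) / 2) * w ∈ D₁ ↔ w ∈ D₀)) := by
  have h0 := prim_ne_zero hq hL hω
  by_cases hw : w = 0
  · simp [hw, d.z0, d.z1]
  obtain ⟨n, rfl⟩ := hω w hw
  obtain ⟨r, hr⟩ := hdvd
  have e : (q + 1) / 2 = m * r := by
    rw [hr, mul_assoc]; exact Nat.mul_div_cancel_left _ (by norm_num)
  rw [hr, Nat.mul_div_cancel_left _ (by omega), ← hr, e, ← pow_add]
  constructor
  · rintro ⟨j, rfl⟩
    have e2 : m * (j + j) + n = n + 2 * m * j := by ring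
    rw [e2, d.comp, d.comp, d.per]
    simp
  · intro h
    obtain ⟨j, rfl⟩ := Nat.not_even_iff_odd.1 h
    have e2 : m * (2 * j + 1) + n = (n + m) + 2 * m * j := by ring
    rw [e2, d.comp, d.per, d.sh]
    simp [d.comp, d.per, d.sh]

end

lemma prop_aux (a b c : Prop) : (a ∧ b ∨ ¬ a ∧ c) ∨ (¬ a ∧ b ∨ a ∧ c) ↔ b ∨ c := by tauto


/-- Corollary 3.8: the four sets `C₀, C₁, C₂, C₃` are of type Q and fit the
spread `{K_y} ∪ {K_∞}`. -/
theorem semiprimitive_typeQ_spread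
    (p s q m l t : ℕ) (hp : p.Prime) (hpodd : p ≠ 2) (hs : 0 < s) (hq : q = p ^ s)
    (hm : 0 < m) (hdvd : 2 * m ∣ q + 1)
    (hl : 0 < l) (hldvd : 2 * m ∣ p ^ l + 1)
    (hlmin : ∀ l', 0 < l' → 2 * m ∣ p ^ l' + 1 → l ≤ l')
    (ht : s = l * t)
    (K L : Type) [Field K] [Fintype K] [Field L] [Fintype L] [Algebra K L] [CharP L p]
    (hK : Fintype.card K = q) (hL : Fintype.card L = q ^ 2)
    (ω : L) (hω : IsPrim L ω)
    (Kst : Finset ℕ) (hKsub : ∀ k ∈ Kst, k < 2 * m) (hKcard : Kst.card = m)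
    (hKdisj : ∀ k ∈ Kst, (k + m) % (2 * m) ∉ Kst)
    (D₀ D₁ : Set L)
    (hD₀ : D₀ = ⋃ i ∈ Kst, cyc L ω (2 * m) i)
    (hD₁ : D₁ = ⋃ i ∈ Kst, cyc L ω (2 * m) (i + m))
    (T₀ T₁ : Set K)
    (S₀ S₁ : Set L)
    (hS₀ : S₀ = {x : L | Algebra.trace K L x ∈ T₀})
    (hS₁ : S₁ = {x : L | Algebra.trace K L (x * ω ^ m) ∈ T₁})
    (ε : ℕ) (hε : ε = if Even ((p ^ l + 1) / (2 * m)) ∧ Odd t then 1 else 0)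
    (Dε : Set L) (hDε : Dε = if ε = 0 then D₀ else D₁)
    (A₀ A₁ : Set L) (hA₀ : A₀ = S₀ \ S₁) (hA₁ : A₁ = S₁ \ S₀)
    (hT₀ : T₀.ncard = (q - 1) / 2) (hT₁ : T₁.ncard = (q - 1) / 2)
    (Dε' : Set L) (hDε' : Dε' = if ε = 0 then D₁ else D₀)
    (S₁' A₀' A₁' : Set L)
    (hS₁' : S₁' = {x : L | Algebra.trace K L (x * ω ^ m) ∈ Set.univ \ T₁})
    (hA₀' : A₀' = S₀ \ S₁') (hA₁' : A₁' = S₁' \ S₀)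
    (C₀ C₁ C₂ C₃ : Set (L × L))
    (hC₀ : C₀ = {w | ∃ x ∈ D₀, ∃ y ∈ A₀, w = (x, x * y)} ∪
      {w | ∃ x ∈ D₁, ∃ y ∈ A₁, w = (x, x * y)} ∪
      {w | ∃ x ∈ Dε, w = ((0 : L), x)})
    (hC₁ : C₁ = {w | ∃ x ∈ D₀, ∃ y ∈ A₀', w = (x, x * y)} ∪
      {w | ∃ x ∈ D₁, ∃ y ∈ A₁', w = (x, x * y)})
    (hC₂ : C₂ = {w | ∃ x ∈ D₁, ∃ y ∈ A₀, w = (x, x * y)} ∪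
      {w | ∃ x ∈ D₀, ∃ y ∈ A₁, w = (x, x * y)} ∪
      {w | ∃ x ∈ Dε', w = ((0 : L), x)})
    (hC₃ : C₃ = {w | ∃ x ∈ D₁, ∃ y ∈ A₀', w = (x, x * y)} ∪
      {w | ∃ x ∈ D₀, ∃ y ∈ A₁', w = (x, x * y)})
    (Ky : L → Set (L × L)) (hKy : ∀ y, Ky y = {w | ∃ x : L, w = (x, x * y)})
    (Kinf : Set (L × L)) (hKinf : Kinf = {w | ∃ x : L, w = ((0 : L), x)})
    : (IsTypeQ p q L C₀ ∧ IsTypeQ p q L C₁ ∧ IsTypeQ p q L C₂ ∧ IsTypeQ p q L C₃) ∧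
      C₀ ∪ C₂ ∪ {((0 : L), (0 : L))} = (⋃ y ∈ A₀ ∪ A₁, Ky y) ∪ Kinf ∧
      C₁ ∪ C₃ ∪ {((0 : L), (0 : L))} = ⋃ y ∈ A₀' ∪ A₁', Ky y := by
  classical
  have hp2 : 2 ≤ p := hp.two_le
  have hpo : Odd p := hp.odd_of_ne_two hpodd
  have hqo : Odd q := by rw [hq]; exact hpo.pow
  have hq3 : 3 ≤ q := by
    have h3 : 3 ≤ p := by omega
    rw [hq]
    exact h3.trans (Nat.le_self_pow hs.ne' p)
  have d := mkDFacts hq3 hL hω hm hdvd Kst hKsub hKcard hKdisj D₀ D₁ hD₀ hD₁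
  have c := d.cfg (K := K) hq3 hqo hK hL hω hdvd
  have cn := c.neg
  obtain ⟨φ, hφ, hψ⟩ := exists_phi hp K L
  have par := eps_parity hpo hq hm hdvd hldvd ht
  have th := d.theta hq3 hL hω hdvd hm
  have one : ∀ x, sgnD D₀ D₁ x = 1 ↔ x ∈ D₀ := fun x => DFacts.one x
  have negone := d.negone hω
  have disj := d.disj hω
  have nz0 : ∀ x ∈ D₀, x ≠ 0 := by rintro x hx rfl; exact d.z0 hx
  have nz1 : ∀ x ∈ D₁, x ≠ 0 := by rintro x hx rfl; exact d.z1 hx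
  have hT0 : 2 * T₀.ncard + 1 = q := by
    obtain ⟨a, ha⟩ := hqo
    omega
  have hT1 : 2 * T₁.ncard + 1 = q := by
    obtain ⟨a, ha⟩ := hqo
    omega
  have hT1' : 2 * (Set.univ \ T₁).ncard = q + 1 := by
    have h := Set.ncard_sdiff_add_ncard_of_subset (Set.subset_univ T₁)
    rw [Set.ncard_univ, Nat.card_eq_fintype_card, hK] at h
    omega
  have hIe : ∀ w, ω ^ ((q + 1) / 2) * w ∈ Dε ↔ sgnD D₀ D₁ w = -1 := by
    intro w
    rw [negone, hDε, hε]
    by_cases hev : Even ((q + 1) / (2 * m))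
    · rw [if_pos (par.2 hev), if_neg one_ne_zero]
      exact ((th w).1 hev).1
    · rw [if_neg (mt par.1 hev), if_pos rfl]
      exact ((th w).2 hev).1
  have hIe' : ∀ w, ω ^ ((q + 1) / 2) * w ∈ Dε' ↔ - sgnD D₀ D₁ w = -1 := by
    intro w
    rw [neg_inj, one, hDε', hε]
    by_cases hev : Even ((q + 1) / (2 * m))
    · rw [if_pos (par.2 hev), if_neg one_ne_zero]
      exact ((th w).1 hev).2
    · rw [if_neg (mt par.1 hev), if_pos rfl]
      exact ((th w).2 hev).2
  have mA0 : ∀ y, y ∈ A₀ ↔ Algebra.trace K L y ∈ T₀ ∧ Algebra.trace K L (y * ω ^ m) ∉ T₁ := by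
    intro y; rw [hA₀, hS₀, hS₁]; rfl
  have mA1 : ∀ y, y ∈ A₁ ↔ Algebra.trace K L y ∉ T₀ ∧ Algebra.trace K L (y * ω ^ m) ∈ T₁ := by
    intro y; rw [hA₁, hS₀, hS₁]; exact and_comm
  have mA0' : ∀ y, y ∈ A₀' ↔ Algebra.trace K L y ∈ T₀ ∧
      Algebra.trace K L (y * ω ^ m) ∉ Set.univ \ T₁ := by
    intro y; rw [hA₀', hS₀, hS₁']; rfl
  have mA1' : ∀ y, y ∈ A₁' ↔ Algebra.trace K L y ∉ T₀ ∧
      Algebra.trace K L (y * ω ^ m) ∈ Set.univ \ T₁ := by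
    intro y; rw [hA₁', hS₀, hS₁']; exact and_comm
  have mem : ∀ (D : Set L) (A : Set L) (x y : L), x ≠ 0 →
      ((∃ x' ∈ D, ∃ y' ∈ A, (x, x * y) = (x', x' * y')) ↔ x ∈ D ∧ y ∈ A) := by
    intro D A x y hx
    constructor
    · rintro ⟨x', hx', y', hy', h⟩
      rw [Prod.mk.injEq] at h
      obtain ⟨rfl, h2⟩ := h
      rw [mul_left_cancel₀ hx h2]
      exact ⟨hx', hy'⟩
    · rintro ⟨h1, h2⟩
      exact ⟨x, h1, y, h2, rfl⟩
  have memI : ∀ (D : Set L) (x y : L), x ≠ 0 →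
      ((∃ x' ∈ D, (x, x * y) = ((0 : L), x')) ↔ False) := by
    intro D x y hx
    constructor
    · rintro ⟨x', _, h⟩
      exact hx (congrArg Prod.fst h)
    · exact False.elim
  have mem0 : ∀ (D : Set L) (A : Set L) (w : L), (0 : L) ∉ D →
      ((∃ x' ∈ D, ∃ y' ∈ A, ((0 : L), w) = (x', x' * y')) ↔ False) := by
    intro D A w h0
    constructor
    · rintro ⟨x', hx', y', hy', h⟩
      have := congrArg Prod.fst h
      simp only at this
      rw [← this] at hx'
      exact h0 hx'
    · exact False.elim
  have memI0 : ∀ (D : Set L) (w : L),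
      ((∃ x' ∈ D, ((0 : L), w) = ((0 : L), x')) ↔ w ∈ D) := by
    intro D w
    constructor
    · rintro ⟨x', hx', h⟩
      rw [show w = x' from congrArg Prod.snd h]
      exact hx'
    · intro h
      exact ⟨w, h, rfl⟩
  have s0 : Shape (ω ^ m) (sgnD D₀ D₁) T₀ T₁ Dε C₀ := by
    constructor
    · intro x y hx
      rw [hC₀, one, negone, ← mA0, ← mA1]
      simp only [Set.mem_union, Set.mem_ofPred_eq, mem _ _ x y hx, memI _ x y hx, or_false]
    · intro w
      rw [hC₀]
      simp only [Set.mem_union, Set.mem_ofPred_eq, mem0 _ _ w d.z0, mem0 _ _ w d.z1, memI0,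
        false_or]
  have s2 : Shape (ω ^ m) (fun x => - sgnD D₀ D₁ x) T₀ T₁ Dε' C₂ := by
    constructor
    · intro x y hx
      rw [hC₂, neg_inj, neg_eq_iff_eq_neg, one, negone, ← mA0, ← mA1]
      simp only [Set.mem_union, Set.mem_ofPred_eq, mem _ _ x y hx, memI _ x y hx, or_false]
    · intro w
      rw [hC₂]
      simp only [Set.mem_union, Set.mem_ofPred_eq, mem0 _ _ w d.z0, mem0 _ _ w d.z1, memI0,
        false_or]
  have s1 : Shape (ω ^ m) (sgnD D₀ D₁) T₀ (Set.univ \ T₁) ∅ C₁ := by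
    constructor
    · intro x y hx
      rw [hC₁, one, negone, ← mA0', ← mA1']
      simp only [Set.mem_union, Set.mem_ofPred_eq, mem _ _ x y hx]
    · intro w
      rw [hC₁]
      simp only [Set.mem_union, Set.mem_ofPred_eq, mem0 _ _ w d.z0, mem0 _ _ w d.z1, false_or,
        Set.mem_empty_iff_false]
  have s3 : Shape (ω ^ m) (fun x => - sgnD D₀ D₁ x) T₀ (Set.univ \ T₁) ∅ C₃ := by
    constructor
    · intro x y hx
      rw [hC₃, neg_inj, neg_eq_iff_eq_neg, one, negone, ← mA0', ← mA1']
      simp only [Set.mem_union, Set.mem_ofPred_eq, mem _ _ x y hx]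
    · intro w
      rw [hC₃]
      simp only [Set.mem_union, Set.mem_ofPred_eq, mem0 _ _ w d.z0, mem0 _ _ w d.z1, false_or,
        Set.mem_empty_iff_false]
  have ex : ∀ T : Set K, 2 * T.ncard + 1 = q → ∃ k, k ∉ T := by
    intro T hT
    by_contra hcon
    push Not at hcon
    have : T = Set.univ := Set.eq_univ_of_forall hcon
    rw [this, Set.ncard_univ, Nat.card_eq_fintype_card, hK] at hT
    omega
  have param : ∀ x w : L, x ≠ 0 → ∃ y, w = x * y := fun x w hx => ⟨w / x, by field_simp⟩
  have memK : ∀ x y y' : L, x ≠ 0 → ((x, x * y) ∈ Ky y' ↔ y = y') := by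
    intro x y y' hx
    rw [hKy]
    constructor
    · rintro ⟨x', h⟩
      rw [Prod.mk.injEq] at h
      obtain ⟨rfl, h2⟩ := h
      exact mul_left_cancel₀ hx h2
    · rintro rfl
      exact ⟨x, rfl⟩
  have memK0 : ∀ w y' : L, (((0 : L), w) ∈ Ky y' ↔ w = 0) := by
    intro w y'
    rw [hKy]
    constructor
    · rintro ⟨x', h⟩
      rw [Prod.mk.injEq] at h
      obtain ⟨rfl, h2⟩ := h
      simpa using h2
    · rintro rfl
      exact ⟨0, by simp⟩
  have dd : ∀ x, x ≠ 0 → ((x ∈ D₁) ↔ ¬ (x ∈ D₀)) := disj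
  refine ⟨⟨typeQ_A c φ hφ hψ hT0 hT1 hIe s0, typeQ_B c φ hφ hψ hT0 hT1' s1,
    typeQ_A cn φ hφ hψ hT0 hT1 hIe' s2, typeQ_B cn φ hφ hψ hT0 hT1' s3⟩, ?_, ?_⟩
  · ext ⟨x, w⟩
    by_cases hx : x = 0
    · subst hx
      have hKi : ((0 : L), w) ∈ Kinf := by rw [hKinf]; exact ⟨w, rfl⟩
      simp only [Set.mem_union, s0.h0, s2.h0, hKi, or_true, iff_true, Set.mem_singleton_iff,
        Prod.mk.injEq, true_and]
      by_cases hw : w = 0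
      · right; exact hw
      · left
        rw [hDε, hDε']
        have := disj w hw
        split_ifs
        · rw [this]; exact em _
        · rw [this]; exact (em _).symm
    · obtain ⟨y, rfl⟩ := param x w hx
      have hKi : (x, x * y) ∉ Kinf := by
        rw [hKinf]
        rintro ⟨x', h⟩
        exact hx (congrArg Prod.fst h)
      have hz : (x, x * y) ∉ ({((0 : L), (0 : L))} : Set (L × L)) := by
        intro h
        exact hx (congrArg Prod.fst h)
      rw [Set.mem_union, Set.mem_union, Set.mem_union, s0.h1 x y hx, s2.h1 x y hx, neg_inj,
        neg_eq_iff_eq_neg, one, negone, ← mA0, ← mA1, disj x hx]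
      simp only [hKi, hz, or_false, Set.mem_iUnion, memK x y _ hx, exists_prop, exists_eq_right',
        Set.mem_union]
      exact prop_aux _ _ _
  · ext ⟨x, w⟩
    by_cases hx : x = 0
    · subst hx
      obtain ⟨k0, hk0⟩ := ex T₀ hT0
      obtain ⟨k1, hk1⟩ := ex T₁ hT1
      obtain ⟨y, hy⟩ := c.bij.2 (k0, k1)
      rw [Prod.mk.injEq] at hy
      have hyA : y ∈ A₁' := by
        rw [mA1', hy.1, hy.2]
        exact ⟨hk0, Set.mem_univ _, hk1⟩
      simp only [Set.mem_union, s1.h0, s3.h0, Set.mem_singleton_iff, Set.mem_empty_iff_false,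
        Prod.mk.injEq, true_and, false_or, Set.mem_iUnion, memK0, exists_prop]
      exact ⟨fun h => ⟨y, Or.inr hyA, h⟩, fun ⟨_, _, h⟩ => h⟩
    · obtain ⟨y, rfl⟩ := param x w hx
      have hz : (x, x * y) ∉ ({((0 : L), (0 : L))} : Set (L × L)) := by
        intro h
        exact hx (congrArg Prod.fst h)
      rw [Set.mem_union, Set.mem_union, s1.h1 x y hx, s3.h1 x y hx, neg_inj,
        neg_eq_iff_eq_neg, one, negone, ← mA0', ← mA1', disj x hx]
      simp only [hz, or_false, Set.mem_iUnion, memK x y _ hx, exists_prop, exists_eq_right',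
        Set.mem_union]
      exact prop_aux _ _ _

end
end

section
/- In the Wilson–Xiang setting, assume |A| = |B| = (q+1)/2 and |A_e| + |B_o| = |A_o| + |B_e| − 2(−1)^{(q−1)/2}. Then E_0 = D_0 ∪ D_2 ∪ D_3 is a set of type Q in F_{q²} × F_{q²}. -/
noncomputable section

/-- nonzero squares of `K` -/
def sqSet (K : Type) [Field K] : Set K := {y | ∃ z : K, z ≠ 0 ∧ y = z ^ 2}

set_option linter.unusedSectionVars false
set_option maxHeartbeats 2000000
namespace WX

/-- Complex-valued quadratic character. -/
def qc (F : Type) [Field F] [Fintype F] : MulChar F ℂ :=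
  letI := Classical.decEq F
  (quadraticChar F).ringHomComp (Int.castRingHom ℂ)

section basic
variable {F : Type} [Field F] [Fintype F]

lemma qc_apply [DecidableEq F] (a : F) : qc F a = ((quadraticChar F a : ℤ) : ℂ) := by
  unfold qc
  simp only [MulChar.ringHomComp_apply, eq_intCast]
  congr!

lemma qc_zero : qc F 0 = 0 := by classical simp [qc_apply]

lemma qc_cases {a : F} (ha : a ≠ 0) : qc F a = 1 ∨ qc F a = -1 := by
  classical
  rcases quadraticChar_dichotomy ha with h | h <;> simp [qc_apply, h]

lemma qc_sq {a : F} (ha : a ≠ 0) : qc F a * qc F a = 1 := by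
  rcases qc_cases ha with h | h <;> simp [h]

lemma qc_mul_self {a : F} (ha : a ≠ 0) : qc F (a * a) = 1 := by
  rw [map_mul, qc_sq ha]

lemma qc_pow_two {a : F} (ha : a ≠ 0) : qc F (a ^ 2) = 1 := by
  rw [sq, qc_mul_self ha]

lemma qc_inv (a : F) : qc F a⁻¹ = qc F a := by
  by_cases ha : a = 0
  · simp [ha]
  · have h1 : qc F a⁻¹ * qc F a = 1 := by rw [← map_mul, inv_mul_cancel₀ ha, map_one]
    have h2 := qc_sq ha
    calc qc F a⁻¹ = qc F a⁻¹ * (qc F a * qc F a) := by rw [h2, mul_one]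
      _ = (qc F a⁻¹ * qc F a) * qc F a := by ring
      _ = _ := by rw [h1, one_mul]

lemma qc_ne_zero {a : F} (ha : a ≠ 0) : qc F a ≠ 0 := by
  rcases qc_cases ha with h | h <;> simp [h]

lemma qc_one_iff {a : F} : qc F a = 1 ↔ a ≠ 0 ∧ IsSquare a := by
  classical
  by_cases ha : a = 0
  · simp [ha, qc_zero]
  · rw [qc_apply, ← quadraticChar_one_iff_isSquare ha]
    simp only [ne_eq, ha, not_false_eq_true, true_and]
    norm_cast

lemma qc_neg_one_iff {a : F} : qc F a = -1 ↔ ¬ IsSquare a := by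
  classical
  rw [qc_apply, ← quadraticChar_neg_one_iff_not_isSquare]
  norm_cast

variable (hF : ringChar F ≠ 2)
include hF

lemma qc_ne_one : qc F ≠ 1 := by
  classical
  intro h
  obtain ⟨a, ha⟩ := quadraticChar_exists_neg_one (F := F) hF
  have h1 : qc F a = -1 := by rw [qc_apply, ha]; simp
  have ha0 : a ≠ 0 := by
    rintro rfl
    simp at ha
  rw [h, MulChar.one_apply ha0.isUnit] at h1
  norm_num at h1

lemma qc_sum : ∑ a : F, qc F a = 0 := MulChar.sum_eq_zero_of_ne_one (qc_ne_one hF)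

lemma qc_quadratic : (qc F).IsQuadratic := by
  intro a
  by_cases ha : a = 0
  · left; rw [ha, qc_zero]
  · right; exact qc_cases ha

lemma qc_card_sqrts [DecidableEq F] (a : F) :
    ∑ x : F, (if x ^ 2 = a then (1 : ℂ) else 0) = 1 + qc F a := by
  have := quadraticChar_card_sqrts hF a
  rw [qc_apply, Finset.sum_boole]
  have h2 : ((({x : F | x ^ 2 = a} : Set F).toFinset.card : ℤ) : ℂ) = ((quadraticChar F a + 1 : ℤ) : ℂ) := by
    rw [this]
  push_cast at h2
  rw [add_comm, ← h2]
  congr 2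
  ext; simp

/-- change of variables x -> x^2 -/
lemma sum_sq (f : F → ℂ) : ∑ x : F, f (x ^ 2) = ∑ k : F, (1 + qc F k) * f k := by
  classical
  simp_rw [← qc_card_sqrts hF, Finset.sum_mul]
  rw [Finset.sum_comm]
  refine Finset.sum_congr rfl fun x _ => ?_
  simp

/-- change of variables with twist -/
lemma sum_sq_twist {κ : F} (hκ : κ ≠ 0) (f : F → ℂ) :
    ∑ k : F, (1 + qc F κ * qc F k) * f k = ∑ x : F, f (κ * x ^ 2) := by
  rw [sum_sq hF (fun t => f (κ * t))]
  symm
  apply Fintype.sum_equiv (Equiv.mulLeft₀ κ hκ)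
  intro x
  change _ = (1 + qc F κ * qc F (κ * x)) * f (κ * x)
  rw [map_mul, ← mul_assoc (qc F κ), qc_sq hκ, one_mul]

variable {χ : AddChar F ℂ} (hχ : χ.IsPrimitive)
include hχ

lemma gauss_sq : gaussSum (qc F) χ * gaussSum (qc F) χ = qc F (-1) * Fintype.card F := by
  rw [← sq]
  exact gaussSum_sq (qc_ne_one hF) (qc_quadratic hF) hχ

lemma gauss_ne_zero : gaussSum (qc F) χ ≠ 0 := by
  intro h
  have := gauss_sq hF hχ
  rw [h, zero_mul] at this
  have h1 : qc F (-1) ≠ 0 := qc_ne_zero (by simp)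
  have h2 : (Fintype.card F : ℂ) ≠ 0 := by exact_mod_cast Fintype.card_ne_zero
  exact mul_ne_zero h1 h2 this.symm

/-- Gauss transform. -/
lemma gauss_shift (t : F) : ∑ s : F, qc F s * χ (s * t) = qc F t * gaussSum (qc F) χ := by
  by_cases ht : t = 0
  · simp [ht, qc_zero, qc_sum hF]
  · rw [gaussSum, Finset.mul_sum]
    apply Fintype.sum_equiv (Equiv.mulRight₀ t ht)
    intro x
    change _ = qc F t * (qc F (x * t) * χ (x * t))
    rw [map_mul (qc F)]
    linear_combination (-(qc F x * χ (x * t))) * qc_sq ht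

lemma sum_prim [DecidableEq F] (t : F) :
    ∑ s : F, χ (s * t) = if t = 0 then (Fintype.card F : ℂ) else 0 := by
  have := AddChar.sum_mulShift t hχ
  rw [this]; split_ifs <;> simp
end basic

section ext
variable {K L : Type} [Field K] [Fintype K] [Field L] [Fintype L] [Algebra K L]
  (hc : Fintype.card L = Fintype.card K ^ 2)
include hc

lemma finrank_two : Module.finrank K L = 2 := by
  have h := Module.card_eq_pow_finrank (K := K) (V := L)
  rw [hc] at h
  exact (Nat.pow_right_injective (Fintype.one_lt_card (α := K)) h).symm

lemma tr_eq (z : L) : algebraMap K L (Algebra.trace K L z) = z + z ^ Fintype.card K := by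
  rw [FiniteField.algebraMap_trace_eq_sum_pow, finrank_two hc]
  simp [Finset.sum_range_succ]

lemma nm_eq (z : L) : algebraMap K L (Algebra.norm K z) = z * z ^ Fintype.card K := by
  rw [FiniteField.algebraMap_norm_eq_prod_pow, finrank_two hc]
  simp [Finset.prod_range_succ]

omit hc in
lemma nm_ne_zero {z : L} (hz : z ≠ 0) : Algebra.norm K z ≠ 0 := Algebra.norm_ne_zero_iff.mpr hz

lemma tr_alg (k : K) : Algebra.trace K L (algebraMap K L k) = 2 * k := by
  rw [Algebra.trace_algebraMap, finrank_two hc]; simp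

omit hc in
lemma tr_mul (k : K) (z : L) : Algebra.trace K L (algebraMap K L k * z) = k * Algebra.trace K L z := by
  rw [← Algebra.smul_def, map_smul, smul_eq_mul]

lemma pair_bij {μ : L} (hμ : μ ∉ Set.range (algebraMap K L)) :
    Function.Bijective (fun st : K × K => algebraMap K L st.1 + algebraMap K L st.2 * μ) := by
  rw [Fintype.bijective_iff_injective_and_card]
  constructor
  · rintro ⟨s, t⟩ ⟨s', t'⟩ h
    simp only at h
    by_cases htt : t = t'
    · subst htt
      simpa using h
    · exfalso
      apply hμ
      refine ⟨(s' - s) / (t - t'), ?_⟩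
      have : algebraMap K L t - algebraMap K L t' ≠ 0 := by
        rw [← map_sub]; simpa [sub_eq_zero] using htt
      rw [map_div₀, map_sub, map_sub, div_eq_iff this]
      linear_combination -h
  · rw [Fintype.card_prod, hc, sq]

lemma exists_tr_ne {w : L} (hw : w ≠ 0) : ∃ z, Algebra.trace K L (z * w) ≠ 0 := by
  have htr := (traceForm_nondegenerate K L).1 w
  simp_rw [Algebra.traceForm_apply] at htr
  by_contra! hf
  exact hw (htr fun z => by rw [mul_comm]; exact hf z)

lemma tr_line {z w : L} (hw : w ≠ 0) (h1 : Algebra.trace K L z = 0)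
    (h2 : Algebra.trace K L w = 0) : ∃ k : K, z = algebraMap K L k * w := by
  by_cases ht : z / w ∈ Set.range (algebraMap K L)
  · obtain ⟨k, hk⟩ := ht
    exact ⟨k, by rw [hk, div_mul_cancel₀ _ hw]⟩
  · exfalso
    obtain ⟨y, hy⟩ := exists_tr_ne (K := K) hc hw
    obtain ⟨⟨s, t⟩, rfl⟩ := (pair_bij hc ht).2 y
    apply hy
    simp only
    have : (algebraMap K L s + algebraMap K L t * (z / w)) * w = algebraMap K L s * w + algebraMap K L t * z := by
      field_simp
    rw [this, map_add, tr_mul, tr_mul, h1, h2]; simp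

lemma exists_delta : ∃ δ : L, δ ≠ 0 ∧ Algebra.trace K L δ = 0 := by
  by_contra! h
  have inj : Function.Injective (Algebra.trace K L) := by
    rw [injective_iff_map_eq_zero]
    intro a ha
    by_contra h0
    exact h a h0 ha
  have := Fintype.card_le_of_injective _ inj
  rw [hc] at this
  have h1 := Fintype.one_lt_card (α := K)
  nlinarith

lemma pow_div_two_eq (x : L) (hodd : Odd (Fintype.card K)) :
    x ^ (Fintype.card L / 2) = algebraMap K L (Algebra.norm K x ^ (Fintype.card K / 2)) := by
  rw [map_pow, nm_eq hc, ← pow_succ', ← pow_mul, hc]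
  congr 1
  obtain ⟨m, hm⟩ := hodd
  rw [hm]
  have : (2 * m + 1) / 2 = m := by omega
  rw [this]
  have h2 : (2 * m + 1) ^ 2 = 2 * ((2 * m + 1 + 1) * m) + 1 := by ring
  rw [h2]; omega

variable (h2 : ringChar K ≠ 2)
include h2

omit hc in
lemma ringCharL : ringChar L ≠ 2 := by
  rwa [← Algebra.ringChar_eq K L]

omit hc in
lemma two_ne : (2 : K) ≠ 0 := Ring.two_ne_zero h2

omit hc in
lemma two_neL : (2 : L) ≠ 0 := Ring.two_ne_zero (ringCharL (L := L) h2)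

omit [Field L] [Fintype L] [Algebra K L] hc in
lemma oddK : Odd (Fintype.card K) := by
  have := FiniteField.odd_card_of_char_ne_two (F := K) h2
  exact Nat.odd_iff.mpr this

lemma qc_norm (x : L) : qc L x = qc K (Algebra.norm K x) := by
  classical
  have hL := ringCharL (L := L) h2
  have e1 := quadraticChar_eq_pow_of_char_ne_two' hL x
  have e2 := quadraticChar_eq_pow_of_char_ne_two' h2 (Algebra.norm K x)
  rw [pow_div_two_eq hc x (oddK h2), ← e2] at e1
  rw [map_intCast] at e1
  rw [qc_apply, qc_apply]
  congr 1
  exact (quadraticChar_isQuadratic L).eq_of_eq_coe (quadraticChar_isQuadratic K) hL e1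

lemma qc_alg {k : K} (hk : k ≠ 0) : qc L (algebraMap K L k) = 1 := by
  rw [qc_norm hc h2, Algebra.norm_algebraMap, finrank_two hc, qc_pow_two hk]

lemma nm_delta {δ : L} (h : Algebra.trace K L δ = 0) :
    algebraMap K L (-Algebra.norm K δ) = δ ^ 2 := by
  have h1 := tr_eq (K := K) hc δ
  rw [h, map_zero] at h1
  rw [map_neg, nm_eq hc]
  linear_combination δ * h1

lemma qc_neg_nm_delta {δ : L} (hδ : δ ≠ 0) (h : Algebra.trace K L δ = 0) :
    qc K (-Algebra.norm K δ) = -1 := by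
  rw [qc_neg_one_iff]
  rintro ⟨k, hk⟩
  have h1 := nm_delta hc h2 h
  rw [hk, map_mul, ← sq] at h1
  have key : ∃ k' : K, algebraMap K L k' = δ := by
    rcases sq_eq_sq_iff_eq_or_eq_neg.mp h1 with h | h
    · exact ⟨k, h⟩
    · exact ⟨-k, by rw [map_neg, h, neg_neg]⟩
  obtain ⟨k', rfl⟩ := key
  rw [tr_alg hc] at h
  have : k' = 0 := by simpa [two_ne h2] using h
  simp [this] at hδ

lemma qc_delta {δ : L} (hδ : δ ≠ 0) (h : Algebra.trace K L δ = 0) :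
    qc L δ = - qc K (-1) := by
  have h1 := qc_neg_nm_delta hc h2 hδ h
  rw [qc_norm hc h2]
  have h3 : qc K (-Algebra.norm K δ) = qc K (-1) * qc K (Algebra.norm K δ) := by
    rw [← map_mul]; simp
  have h4 := qc_sq (F := K) (a := -1) (by simp)
  linear_combination qc K (-1) * h1 - qc K (-1) * h3 - qc K (Algebra.norm K δ) * h4

end ext
end WX

namespace WX

lemma swap3 {α β γ : Type} [Fintype α] [Fintype β] [Fintype γ] (f : α → β → γ → ℂ) :
    ∑ u, ∑ v, ∑ s, f u v s = ∑ s, ∑ u, ∑ v, f u v s := by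
  rw [Finset.sum_comm]
  rw [Finset.sum_congr rfl fun u _ => Finset.sum_comm]
  rw [Finset.sum_comm]
  exact Finset.sum_congr rfl fun u _ => Finset.sum_comm

/-- Inversion as a permutation. -/
def invE (F : Type) [Field F] : F ≃ F := ⟨fun x => x⁻¹, fun x => x⁻¹, inv_inv, inv_inv⟩

lemma invE_apply (F : Type) [Field F] (x : F) : invE F x = x⁻¹ := rfl

section sums
variable {K L : Type} [Field K] [Fintype K] [Field L] [Fintype L] [Algebra K L]
  (hc : Fintype.card L = Fintype.card K ^ 2) (h2 : ringChar K ≠ 2)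
  {χ : AddChar K ℂ} (hχ : χ.IsPrimitive) {ψ : AddChar L ℂ}
  (hψ : ∀ z, ψ z = χ (Algebra.trace K L z))
include hc h2 hχ hψ

local notation "T" => Algebra.trace K L
local notation "al" => algebraMap K L

lemma psi_prim : ψ.IsPrimitive := by
  apply AddChar.IsPrimitive.of_ne_one
  intro h
  apply hχ (one_ne_zero)
  ext x
  obtain ⟨z, hz⟩ := Algebra.trace_surjective K L x
  rw [AddChar.mulShift_apply, one_mul, ← hz, ← hψ, h]; simp

lemma psi_K [DecidableEq K] (z : L) :
    ∑ x : K, ψ (al x * z) = if T z = 0 then (Fintype.card K : ℂ) else 0 := by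
  simp_rw [hψ, tr_mul]
  exact sum_prim h2 hχ _

lemma psi_L [DecidableEq L] (z : L) :
    ∑ x : L, ψ (x * z) = if z = 0 then (Fintype.card K : ℂ) ^ 2 else 0 := by
  rw [sum_prim (ringCharL h2) (psi_prim hc h2 hχ hψ), hc]; simp

lemma quad_sum {c : L} (hc0 : c ≠ 0) (a b : L) :
    ∑ u : L, ∑ v : L, ψ (c * (u * v) + (a * u + b * v)) =
      (Fintype.card K : ℂ) ^ 2 * ψ (-(a * b) / c) := by
  classical
  have : ∀ u v : L, ψ (c * (u * v) + (a * u + b * v)) = ψ (a * u) * ψ (v * (c * u + b)) := by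
    intro u v
    rw [← AddChar.map_add_eq_mul]; congr 1; ring
  simp_rw [this, ← Finset.mul_sum, psi_L hc h2 hχ hψ]
  rw [Finset.sum_eq_single (-b / c)]
  · rw [if_pos (by field_simp; ring), mul_comm]
    congr 2; field_simp
  · intro u _ hu
    rw [if_neg, mul_zero]
    intro h
    apply hu
    rw [eq_div_iff hc0]; linear_combination h
  · simp

lemma S1 (a b : L) : ∑ u : L, ∑ v : L, qc K (T (u * v)) * ψ (a * u + b * v) =
    (Fintype.card K : ℂ) ^ 2 * qc K (-T (a * b)) := by
  have hG := gauss_ne_zero h2 hχ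
  apply mul_right_cancel₀ hG
  have e1 : ∀ u v : L, qc K (T (u * v)) * ψ (a * u + b * v) * gaussSum (qc K) χ =
      ∑ s : K, qc K s * ψ (al s * (u * v) + (a * u + b * v)) := by
    intro u v
    rw [mul_right_comm, ← gauss_shift h2 hχ, Finset.sum_mul]
    refine Finset.sum_congr rfl fun s _ => ?_
    rw [AddChar.map_add_eq_mul ψ (al s * (u * v)), hψ (al s * (u * v)), tr_mul, mul_assoc]
  simp_rw [Finset.sum_mul, e1]
  have e2 : ∑ u : L, ∑ v : L, ∑ s : K, qc K s * ψ (al s * (u * v) + (a * u + b * v)) =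
      ∑ s : K, qc K s * ∑ u : L, ∑ v : L, ψ (al s * (u * v) + (a * u + b * v)) := by
    simp_rw [Finset.mul_sum]
    exact swap3 _
  rw [e2, mul_assoc, ← gauss_shift h2 hχ, Finset.mul_sum]
  apply Fintype.sum_equiv (invE K)
  intro s
  change _ = (Fintype.card K : ℂ) ^ 2 * (qc K s⁻¹ * χ (s⁻¹ * _))
  by_cases hs : s = 0
  · simp [hs, qc_zero]
  · rw [quad_sum hc h2 hχ hψ (by simpa using hs), qc_inv, hψ]
    have : -(a * b) / al s = al (s⁻¹) * (-(a * b)) := by rw [map_inv₀]; field_simp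
    rw [this, tr_mul, map_neg]; ring

omit hχ hψ in
lemma trace_div_iff {g : L} (hg : g ∉ Set.range al) (h : L) (r : K) :
    T (h / (al r + g)) = 0 ↔ r * T h + Algebra.norm K g * T (h / g) = 0 := by
  have hg0 : g ≠ 0 := by rintro rfl; exact hg ⟨0, by simp⟩
  have hrg : al r + g ≠ 0 := by
    intro h0
    apply hg
    exact ⟨-r, by rw [map_neg]; linear_combination -h0⟩
  have key : (al r + g) * (al r + al (Algebra.norm K g) / g) =
      al (r ^ 2 + r * T g + Algebra.norm K g) := by
    simp only [map_add, map_mul, map_pow, tr_eq hc, nm_eq hc]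
    field_simp
    ring
  have hN : al r + al (Algebra.norm K g) / g ≠ 0 := by
    intro h0
    rw [nm_eq hc, mul_div_cancel_left₀ _ hg0] at h0
    have h1 : (al r + g) ^ Fintype.card K = 0 := by
      have : ∀ x y : L, (x + y) ^ Fintype.card K = x ^ Fintype.card K + y ^ Fintype.card K := by
        intro x y
        have := map_add (FiniteField.frobeniusAlgHom K L) x y
        simpa using this
      rw [this, ← map_pow, FiniteField.pow_card, h0]
    exact hrg (pow_eq_zero_iff (Fintype.card_ne_zero) |>.mp h1)
  have hk : r ^ 2 + r * T g + Algebra.norm K g ≠ 0 := by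
    intro h0
    rw [h0, map_zero] at key
    exact mul_ne_zero hrg hN key
  have e : T (h * (al r + al (Algebra.norm K g) / g)) = r * T h + Algebra.norm K g * T (h / g) := by
    rw [← tr_mul, ← tr_mul, ← map_add]; congr 1; field_simp
  have e' : T (h * (al r + al (Algebra.norm K g) / g)) =
      (r ^ 2 + r * T g + Algebra.norm K g) * T (h / (al r + g)) := by
    rw [← tr_mul, ← key]; congr 1; field_simp
  rw [← e, e']
  simp [hk]

lemma not_range {g : L} (hg : qc L g = -1) : g ∉ Set.range al := by
  rintro ⟨k, rfl⟩
  by_cases hk : k = 0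
  · simp [hk, qc_zero] at hg
  · rw [qc_alg hc h2 hk] at hg; norm_num at hg

omit hχ hψ in
lemma tr_ne_of {g h : L} (hg : g ∉ Set.range al) (hh : h ≠ 0) (h0 : T h = 0) : T (h / g) ≠ 0 := by
  intro h1
  obtain ⟨k, hk⟩ := tr_line hc hh h1 h0
  have hg0 : g ≠ 0 := by rintro rfl; exact hg ⟨0, by simp⟩
  apply hg
  refine ⟨k⁻¹, ?_⟩
  have hk0 : al k ≠ 0 := by
    intro h; rw [h, zero_mul, div_eq_zero_iff] at hk; tauto
  rw [map_inv₀]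
  field_simp at hk ⊢
  rw [hk]

lemma S4_aux [DecidableEq K] {g : L} (hg : qc L g = -1) (h : L) :
    ∑ r : K, qc K r * (if T (h / (al r + g)) = 0 then (1 : ℂ) else 0) =
      - qc K (-1) * (qc K (T h) * qc K (T (h / g))) := by
  have hr := not_range hc h2 hχ hψ hg
  simp_rw [trace_div_iff hc h2 hr]
  have hn : qc K (Algebra.norm K g) = -1 := by rw [← qc_norm hc h2, hg]
  by_cases hT : T h = 0
  · rw [hT, qc_zero, zero_mul, mul_zero]
    by_cases hh : h = 0
    · simp [hh, qc_sum h2]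
    · have := tr_ne_of hc h2 hr hh hT
      have hn0 : Algebra.norm K g ≠ 0 := by
        intro h0; rw [h0, qc_zero] at hn; norm_num at hn
      simp [this, hn0]
  · rw [Finset.sum_eq_single (-(Algebra.norm K g * T (h / g)) / T h)]
    · rw [if_pos (by field_simp; ring), mul_one, div_eq_mul_inv, map_mul, qc_inv, neg_eq_neg_one_mul,
        map_mul, map_mul, hn]; ring
    · intro r _ hr
      rw [if_neg, mul_zero]
      intro h0; apply hr
      rw [eq_div_iff hT]; linear_combination h0
    · simp

lemma S4 {g : L} (hg : qc L g = -1) (a b : L) :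
    ∑ u : L, ∑ v : L, qc K (T (u * v)) * qc K (T (u * v * g)) * ψ (a * u + b * v) =
    - (Fintype.card K : ℂ) ^ 2 * (qc K (T (a * b)) * qc K (T (a * b / g))) := by
  classical
  have hr := not_range hc h2 hχ hψ hg
  have hG := gauss_ne_zero h2 hχ
  apply mul_right_cancel₀ (mul_ne_zero hG hG)
  have e1 : ∀ u v : L, qc K (T (u * v)) * qc K (T (u * v * g)) * ψ (a * u + b * v) *
        (gaussSum (qc K) χ * gaussSum (qc K) χ) =
      ∑ s : K, ∑ t : K, qc K s * qc K t * ψ ((al s + al t * g) * (u * v) + (a * u + b * v)) := by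
    intro u v
    have : qc K (T (u * v)) * qc K (T (u * v * g)) * ψ (a * u + b * v) *
        (gaussSum (qc K) χ * gaussSum (qc K) χ) = (qc K (T (u * v)) * gaussSum (qc K) χ) *
        (qc K (T (u * v * g)) * gaussSum (qc K) χ) * ψ (a * u + b * v) := by ring
    rw [this, ← gauss_shift h2 hχ, ← gauss_shift h2 hχ, Finset.sum_mul_sum, Finset.sum_mul]
    refine Finset.sum_congr rfl fun s _ => ?_
    rw [Finset.sum_mul]
    refine Finset.sum_congr rfl fun t _ => ?_
    have e : (al s + al t * g) * (u * v) = al s * (u * v) + al t * (u * v * g) := by ring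
    rw [e, AddChar.map_add_eq_mul ψ (al s * (u * v) + al t * (u * v * g)),
      AddChar.map_add_eq_mul ψ (al s * (u * v)), hψ (al s * (u * v)), tr_mul,
      hψ (al t * (u * v * g)), tr_mul]
    ring
  simp_rw [Finset.sum_mul, e1]
  have e2 : ∑ u : L, ∑ v : L, ∑ s : K, ∑ t : K,
        qc K s * qc K t * ψ ((al s + al t * g) * (u * v) + (a * u + b * v)) =
      ∑ s : K, ∑ t : K, qc K s * qc K t *
        ∑ u : L, ∑ v : L, ψ ((al s + al t * g) * (u * v) + (a * u + b * v)) := by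
    simp_rw [Finset.mul_sum]
    rw [swap3]
    exact Finset.sum_congr rfl fun s _ => swap3 _
  have e3 : ∀ s t : K, qc K s * qc K t *
        ∑ u : L, ∑ v : L, ψ ((al s + al t * g) * (u * v) + (a * u + b * v)) =
      (Fintype.card K : ℂ) ^ 2 * (qc K s * qc K t * ψ (-(a * b) / (al s + al t * g))) := by
    intro s t
    by_cases ht : t = 0
    · simp [ht, qc_zero]
    have hne : al s + al t * g ≠ 0 := by
      intro h0
      apply hr
      refine ⟨- s / t, ?_⟩
      have : al t ≠ 0 := by simpa using ht
      rw [map_div₀, map_neg]; field_simp; linear_combination -h0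
    rw [quad_sum hc h2 hχ hψ hne]; ring
  have e4 : ∀ t : K, ∑ s : K, (qc K s * qc K t * ψ (-(a * b) / (al s + al t * g))) =
      ∑ r : K, if t = 0 then 0 else qc K r * ψ (al t⁻¹ * (-(a * b) / (al r + g))) := by
    intro t
    by_cases ht : t = 0
    · simp [ht, qc_zero]
    · simp only [if_neg ht]
      symm
      apply Fintype.sum_equiv (Equiv.mulRight₀ t ht)
      intro r
      change _ = qc K (r * t) * qc K t * ψ (-(a * b) / (al (r * t) + al t * g))
      rw [map_mul (qc K), mul_assoc (qc K r), qc_sq ht, mul_one]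
      congr 2
      have : al t ≠ 0 := by simpa using ht
      have h3 : al (r * t) + al t * g = al t * (al r + g) := by rw [map_mul]; ring
      rw [h3, map_inv₀, div_eq_mul_inv, div_eq_mul_inv, mul_inv]; ring
  have e5 : ∀ r : K, ∑ t : K, (if t = 0 then 0 else qc K r * ψ (al t⁻¹ * (-(a * b) / (al r + g)))) =
      qc K r * ((Fintype.card K : ℂ) * (if T (a * b / (al r + g)) = 0 then (1 : ℂ) else 0) - 1) := by
    intro r
    have hh := psi_K hc h2 hχ hψ (-(a * b) / (al r + g))
    have : ∑ t : K, (if t = 0 then 0 else ψ (al t⁻¹ * (-(a * b) / (al r + g)))) =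
        ∑ t : K, ψ (al t * (-(a * b) / (al r + g))) - 1 := by
      rw [← Equiv.sum_comp (invE K) (fun t => ψ (al t * (-(a * b) / (al r + g)))),
        ← Finset.sum_erase_add _ _ (Finset.mem_univ (0 : K)),
        ← Finset.sum_erase_add (Finset.univ) (fun i => ψ (al (invE K i) * _)) (Finset.mem_univ (0 : K))]
      simp only [invE_apply, inv_zero, map_zero, zero_mul, AddChar.map_zero_eq_one, if_true]
      rw [add_zero, add_sub_cancel_right]
      refine Finset.sum_congr rfl fun t ht => ?_
      rw [if_neg (Finset.ne_of_mem_erase ht)]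
    have h4 : ∀ t : K, (if t = 0 then 0 else qc K r * ψ (al t⁻¹ * (-(a * b) / (al r + g)))) =
      qc K r * (if t = 0 then 0 else ψ (al t⁻¹ * (-(a * b) / (al r + g)))) := by
      intro t; split_ifs <;> simp
    simp_rw [h4]
    rw [← Finset.mul_sum, this, hh]
    have h5 : T (-(a * b) / (al r + g)) = - T (a * b / (al r + g)) := by
      rw [← map_neg, neg_div]
    rw [h5, neg_eq_zero]
    congr 2
    split_ifs <;> simp
  rw [e2]
  simp_rw [e3, ← Finset.mul_sum]
  rw [Finset.sum_comm]
  simp_rw [e4]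
  rw [Finset.sum_comm]
  simp_rw [e5]
  have e6 : ∑ r : K, qc K r * ((Fintype.card K : ℂ) *
      (if T (a * b / (al r + g)) = 0 then (1 : ℂ) else 0) - 1) =
      (Fintype.card K : ℂ) * ∑ r : K, qc K r * (if T (a * b / (al r + g)) = 0 then (1 : ℂ) else 0)
        - ∑ r : K, qc K r := by
    rw [Finset.mul_sum, ← Finset.sum_sub_distrib]
    refine Finset.sum_congr rfl fun r _ => ?_
    ring
  rw [e6, S4_aux hc h2 hχ hψ hg, qc_sum h2, gauss_sq h2 hχ]
  ring

end sums
end WX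

namespace WX
section Ysums
variable {K L : Type} [Field K] [Fintype K] [Field L] [Fintype L] [Algebra K L]
  (hc : Fintype.card L = Fintype.card K ^ 2) (h2 : ringChar K ≠ 2)

local notation "T" => Algebra.trace K L
local notation "al" => algebraMap K L

/-- indicator of trace zero -/
def tz (K : Type) {L : Type} [Field K] [Field L] [Algebra K L] (z : L) : ℂ :=
  letI := Classical.decEq K
  if Algebra.trace K L z = 0 then 1 else 0

lemma tz_one {z : L} (h : T z = 0) : tz K z = 1 := by simp [tz, h]
lemma tz_zero {z : L} (h : T z ≠ 0) : tz K z = 0 := by simp [tz, h]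

lemma tz_eq_of {z z' : L} (h : T z = 0 ↔ T z' = 0) : tz K z = tz K z' := by
  by_cases h0 : T z = 0
  · rw [tz_one h0, tz_one (h.mp h0)]
  · rw [tz_zero h0, tz_zero (fun h1 => h0 (h.mpr h1))]

/-- The sum Y. -/
def Y (K : Type) {L : Type} [Field K] [Field L] [Fintype L] [Algebra K L] (a m : L) : ℂ :=
  ∑ u : L, qc L u * tz K (a * u + m / u)

lemma Y_comm (a m : L) : Y K a m = Y K m a := by
  unfold Y
  apply Fintype.sum_equiv (invE L)
  intro u
  rw [invE_apply, qc_inv]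
  congr 2
  rw [div_inv_eq_mul, div_eq_mul_inv]; ring

lemma Y_scale {a : L} (ha : a ≠ 0) (m : L) : Y K a m = qc L a * Y K 1 (a * m) := by
  unfold Y
  rw [Finset.mul_sum]
  apply Fintype.sum_equiv (Equiv.mulLeft₀ a ha)
  intro u
  change _ = qc L a * (qc L (a * u) * tz K (1 * (a * u) + a * m / (a * u)))
  rw [map_mul, mul_div_mul_left _ _ ha, one_mul, ← mul_assoc, ← mul_assoc, qc_sq ha, one_mul]

include hc

lemma line_sum {δ : L} (hδ : δ ≠ 0) (hT : T δ = 0) {c : L} (hc0 : c ≠ 0) (f : L → ℂ) :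
    ∑ u : L, tz K (c * u) * f u = ∑ k : K, f (al k * (δ / c)) := by
  classical
  have hne : δ / c ≠ 0 := div_ne_zero hδ hc0
  have inj : Function.Injective (fun k : K => al k * (δ / c)) := by
    intro k k' h
    exact (algebraMap K L).injective (mul_right_cancel₀ hne h)
  have e : ∀ u, tz K (c * u) * f u = if T (c * u) = 0 then f u else 0 := by
    intro u
    split_ifs with h
    · rw [tz_one h, one_mul]
    · rw [tz_zero h, zero_mul]
  simp_rw [e]
  rw [← Finset.sum_filter]
  have : (Finset.univ.filter fun u : L => T (c * u) = 0) =
      Finset.univ.image (fun k : K => al k * (δ / c)) := by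
    ext u
    simp only [Finset.mem_filter, Finset.mem_univ, true_and, Finset.mem_image]
    constructor
    · intro h
      obtain ⟨k, hk⟩ := tr_line hc hδ h hT
      refine ⟨k, ?_⟩
      rw [mul_div_assoc', ← hk]; field_simp
    · rintro ⟨k, rfl⟩
      have : c * (al k * (δ / c)) = al k * δ := by field_simp
      rw [this, tr_mul, hT, mul_zero]
  rw [this, Finset.sum_image (fun x _ y _ h => inj h)]

lemma sum_nonzero [DecidableEq K] : ∑ k : K, (if k = 0 then (0 : ℂ) else 1) = (Fintype.card K : ℂ) - 1 := by
  have : ∀ k : K, (if k = 0 then (0 : ℂ) else 1) = 1 - (if k = 0 then 1 else 0) := by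
    intro k; split_ifs <;> simp
  simp_rw [this, Finset.sum_sub_distrib]
  simp

include h2

lemma Y_one_zero {δ : L} (hδ : δ ≠ 0) (hT : T δ = 0) :
    Y K 1 (0 : L) = ((Fintype.card K : ℂ) - 1) * qc L δ := by
  classical
  unfold Y
  have e : ∀ u : L, qc L u * tz K (1 * u + 0 / u) = tz K (1 * u) * qc L u := by
    intro u; rw [zero_div, add_zero, mul_comm]
  simp_rw [e]
  rw [line_sum hc hδ hT one_ne_zero, ← sum_nonzero hc, Finset.sum_mul]
  refine Finset.sum_congr rfl fun k _ => ?_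
  by_cases hk : k = 0
  · simp [hk, qc_zero]
  · rw [map_mul, qc_alg hc h2 hk, if_neg hk, div_one]

lemma Y_a_zero {δ : L} (hδ : δ ≠ 0) (hT : T δ = 0) {a : L} (ha : a ≠ 0) :
    Y K a 0 = ((Fintype.card K : ℂ) - 1) * (qc L a * qc L δ) := by
  rw [Y_scale ha, mul_zero, Y_one_zero hc h2 hδ hT]; ring

lemma Y_zero_zero : Y K (0 : L) 0 = 0 := by
  unfold Y
  have e : ∀ u : L, qc L u * tz K (0 * u + 0 / u) = qc L u := by
    intro u; rw [zero_mul, zero_div, add_zero, tz_one (map_zero _), mul_one]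
  simp_rw [e]
  exact qc_sum (ringCharL h2)

omit h2 in
lemma frob2 (m : L) : (m ^ Fintype.card K) ^ Fintype.card K = m := by
  rw [← pow_mul, ← sq, ← hc, FiniteField.pow_card]

/-- conjugate written as norm over element -/
lemma Y_cond {m : L} {u : L} (hu : u ≠ 0) :
    T (1 * u + m / u) = 0 ↔ T ((al (Algebra.norm K u) + m ^ Fintype.card K) * u) = 0 := by
  have hn : Algebra.norm K u ≠ 0 := nm_ne_zero hu
  have : T ((al (Algebra.norm K u) + m ^ Fintype.card K) * u) =
      Algebra.norm K u * T (1 * u + m / u) := by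
    apply (algebraMap K L).injective
    rw [map_mul al, tr_eq hc, tr_eq hc]
    have hadd : ∀ x y : L, (x + y) ^ Fintype.card K = x ^ Fintype.card K + y ^ Fintype.card K := by
        intro x y
        have := map_add (FiniteField.frobeniusAlgHom K L) x y
        simpa using this
    rw [hadd, mul_pow, hadd, ← map_pow, FiniteField.pow_card, frob2 hc, div_pow, nm_eq hc]
    field_simp
    ring
  rw [this]
  simp [hn]

lemma fiber_card [DecidableEq K] {n : K} (hn : n ≠ 0) :
    ∑ u : L, (if Algebra.norm K u = n then (1 : ℂ) else 0) = (Fintype.card K : ℂ) + 1 := by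
  set f : K → ℂ := fun n => ∑ u : L, (if Algebra.norm K u = n then (1 : ℂ) else 0) with hf
  have h0 : f 0 = 1 := by
    classical
    simp only [hf, Algebra.norm_eq_zero_iff]
    simp only [Finset.sum_ite_eq', Finset.mem_univ, if_true]
  have hinv : ∀ k : K, k ≠ 0 → f k = f n := by
    intro k hk
    obtain ⟨w, hw⟩ := FiniteField.norm_surjective K L (n / k)
    have hw0 : w ≠ 0 := by
      rintro rfl
      rw [Algebra.norm_zero] at hw
      exact div_ne_zero hn hk hw.symm
    apply Fintype.sum_equiv (Equiv.mulLeft₀ w hw0)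
    intro u
    change _ = (if Algebra.norm K (w * u) = n then (1 : ℂ) else 0)
    rw [map_mul, hw]
    congr 1
    rw [div_mul_eq_mul_div, div_eq_iff hk, mul_right_inj' hn]
  have htot : ∑ k : K, f k = (Fintype.card K : ℂ) ^ 2 := by
    simp only [hf]
    rw [Finset.sum_comm]
    simp [hc]
  have this : ∀ k : K, f k = (if k = 0 then (0 : ℂ) else 1) * f n + (if k = 0 then 1 else 0) := by
    intro k
    split_ifs with h
    · rw [h, h0]; simp
    · rw [hinv k h]; simp
  rw [Finset.sum_congr rfl fun k _ => this k, Finset.sum_add_distrib, ← Finset.sum_mul,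
    sum_nonzero hc] at htot
  simp only [Finset.sum_ite_eq', Finset.mem_univ, if_true] at htot
  have hq : (Fintype.card K : ℂ) - 1 ≠ 0 := by
    have := Fintype.one_lt_card (α := K)
    intro h
    have h1 : (Fintype.card K : ℂ) = 1 := by linear_combination h
    have h2 : Fintype.card K = 1 := by exact_mod_cast h1
    omega
  change f n = _
  apply mul_left_cancel₀ hq
  linear_combination htot

lemma sum_qc_shift {μ : L} (hμ : μ ∉ Set.range al) : ∑ n : K, qc L (al n + μ) = -1 := by
  classical
  have h := qc_sum (F := L) (ringCharL h2)
  rw [← (Equiv.ofBijective _ (pair_bij hc hμ)).sum_comp, Fintype.sum_prod_type_right] at h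
  simp only [Equiv.ofBijective_apply] at h
  have : ∀ t : K, ∑ s : K, qc L (al s + al t * μ) =
      (if t = 0 then 0 else 1) * ∑ n : K, qc L (al n + μ) +
      (if t = 0 then ((Fintype.card K : ℂ) - 1) else 0) := by
    intro t
    split_ifs with ht
    · subst ht
      rw [zero_mul, zero_add, ← sum_nonzero hc]
      refine Finset.sum_congr rfl fun k _ => ?_
      by_cases hk : k = 0
      · simp [hk, qc_zero]
      · rw [map_zero, zero_mul, add_zero, qc_alg hc h2 hk, if_neg hk]
    · rw [one_mul, add_zero]
      symm
      apply Fintype.sum_equiv (Equiv.mulRight₀ t ht)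
      intro n
      change _ = qc L (al (n * t) + al t * μ)
      have : al (n * t) + al t * μ = al t * (al n + μ) := by rw [map_mul]; ring
      rw [this, map_mul (qc L), qc_alg hc h2 ht, one_mul]
  simp_rw [this, Finset.sum_add_distrib, ← Finset.sum_mul, sum_nonzero hc] at h
  simp only [Finset.sum_ite_eq', Finset.mem_univ, if_true] at h
  have hq : (Fintype.card K : ℂ) - 1 ≠ 0 := by
    have := Fintype.one_lt_card (α := K)
    intro h
    have h1 : (Fintype.card K : ℂ) = 1 := by linear_combination h
    have h2 : Fintype.card K = 1 := by exact_mod_cast h1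
    omega
  apply mul_left_cancel₀ hq
  linear_combination h

/-- inner count -/
lemma W_eq [DecidableEq K] {δ : L} (hδ : δ ≠ 0) (hT : T δ = 0) {μ : L} {n : K} (hne : al n + μ ≠ 0) :
    ∑ u : L, tz K ((al n + μ) * u) * (if Algebra.norm K u = n then (1 : ℂ) else 0) =
    1 - qc K (-1) * (qc K n * qc L (al n + μ)) := by
  rw [line_sum hc hδ hT hne]
  have hNδ : Algebra.norm K δ ≠ 0 := nm_ne_zero hδ
  have hN : Algebra.norm K (al n + μ) ≠ 0 := nm_ne_zero hne
  have e : ∀ k : K, (if Algebra.norm K (al k * (δ / (al n + μ))) = n then (1 : ℂ) else 0) =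
      if k ^ 2 = n * Algebra.norm K (al n + μ) * (Algebra.norm K δ)⁻¹ then 1 else 0 := by
    intro k
    congr 1
    have hd : Algebra.norm K (δ / (al n + μ)) = Algebra.norm K δ / Algebra.norm K (al n + μ) := by
      rw [eq_div_iff hN, ← map_mul, div_mul_cancel₀ _ hne]
    rw [map_mul, hd, Algebra.norm_algebraMap, finrank_two hc]
    apply propext
    field_simp
  simp_rw [e]
  rw [qc_card_sqrts h2, map_mul, map_mul, qc_inv, ← qc_norm hc h2, ← qc_norm hc h2,
    qc_delta hc h2 hδ hT]
  ring

lemma Y_eq_sum [DecidableEq K] (m : L) :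
    Y K 1 m = ∑ n : K, qc K n * ∑ u : L, tz K ((al n + m ^ Fintype.card K) * u) *
      (if Algebra.norm K u = n then (1 : ℂ) else 0) := by
  simp_rw [Finset.mul_sum]
  rw [Finset.sum_comm]
  unfold Y
  refine Finset.sum_congr rfl fun u _ => ?_
  by_cases hu : u = 0
  · subst hu
    rw [qc_zero, zero_mul]
    symm
    apply Finset.sum_eq_zero
    intro n _
    by_cases hn : n = 0
    · rw [hn, qc_zero, zero_mul]
    · rw [Algebra.norm_zero, if_neg (Ne.symm hn)]; simp
  · rw [Finset.sum_eq_single (Algebra.norm K u)]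
    · rw [if_pos rfl, mul_one, ← qc_norm hc h2, tz_eq_of (Y_cond hc h2 hu)]
    · intro n _ hn
      rw [if_neg (Ne.symm hn)]; simp
    · simp

lemma qc_conj (m : L) : qc L (m ^ Fintype.card K) = qc L m := by
  rw [qc_norm hc h2, qc_norm hc h2]
  congr 1
  apply (algebraMap K L).injective
  rw [nm_eq hc, nm_eq hc, frob2 hc, mul_comm]

lemma Y_generic {m : L} (hm : m ∉ Set.range al) :
    Y K 1 m = qc K (-1) * (1 + qc L m) := by
  classical
  obtain ⟨δ, hδ, hT⟩ := exists_delta (K := K) hc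
  have hμ : m ^ Fintype.card K ∉ Set.range al := by
    rintro ⟨k, hk⟩
    apply hm
    refine ⟨k, ?_⟩
    have := frob2 hc m
    rw [← hk, ← map_pow, FiniteField.pow_card] at this
    exact this
  rw [Y_eq_sum hc h2]
  have e : ∀ n : K, qc K n * ∑ u : L, tz K ((al n + m ^ Fintype.card K) * u) *
      (if Algebra.norm K u = n then (1 : ℂ) else 0) =
      qc K n - qc K (-1) * (qc L (al n + m ^ Fintype.card K)
        - (if n = 0 then qc L (m ^ Fintype.card K) else 0)) := by
    intro n
    have hne : al n + m ^ Fintype.card K ≠ 0 := by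
      intro h0
      exact hμ ⟨-n, by rw [map_neg]; linear_combination -h0⟩
    rw [W_eq hc h2 hδ hT hne]
    by_cases hn : n = 0
    · simp [hn, qc_zero]
    · rw [if_neg hn]
      linear_combination (- qc K (-1) * qc L (al n + m ^ Fintype.card K)) * qc_sq hn
  simp_rw [e, Finset.sum_sub_distrib, ← Finset.mul_sum, Finset.sum_sub_distrib, sum_qc_shift hc h2 hμ,
    qc_sum h2]
  simp only [Finset.sum_ite_eq', Finset.mem_univ, if_true, qc_conj hc h2]
  ring

lemma Y_special {k : K} (hk : k ≠ 0) :
    Y K 1 (al k) = qc K (-1) * ((Fintype.card K : ℂ) * qc K k - Fintype.card K + 2) := by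
  classical
  obtain ⟨δ, hδ, hT⟩ := exists_delta (K := K) hc
  rw [Y_eq_sum hc h2, ← map_pow, FiniteField.pow_card]
  have e : ∀ n : K, qc K n * ∑ u : L, tz K ((al n + al k) * u) *
      (if Algebra.norm K u = n then (1 : ℂ) else 0) =
      qc K n - qc K (-1) * (if n = 0 then 0 else 1) +
      (if n = -k then qc K (-k) * Fintype.card K + qc K (-1) else 0) := by
    intro n
    by_cases hnk : n = -k
    · have hn : n ≠ 0 := by rw [hnk]; simpa using hk
      rw [if_pos hnk, if_neg hn]
      have : ∀ u : L, tz K ((al n + al k) * u) = 1 := by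
        intro u; apply tz_one; rw [hnk, map_neg]; simp
      simp_rw [this, one_mul]
      rw [fiber_card hc h2 hn, ← hnk]; ring
    · have hne : al n + al k ≠ 0 := by
        rw [← map_add]
        simp only [ne_eq, FaithfulSMul.algebraMap_eq_zero_iff]
        intro h; apply hnk; linear_combination h
      rw [W_eq hc h2 hδ hT hne, if_neg hnk]
      by_cases hn : n = 0
      · simp [hn, qc_zero]
      · have : qc L (al n + al k) = 1 := by
          rw [← map_add]
          apply qc_alg hc h2
          intro h; apply hnk; linear_combination h
        rw [if_neg hn, this]
        linear_combination (- qc K (-1)) * qc_sq hn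
  simp_rw [e, Finset.sum_add_distrib, Finset.sum_sub_distrib, ← Finset.mul_sum, sum_nonzero hc, qc_sum h2]
  simp only [Finset.sum_ite_eq', Finset.mem_univ, if_true]
  rw [neg_eq_neg_one_mul k, map_mul]
  ring

variable {χ : AddChar K ℂ} (hχ : χ.IsPrimitive) {ψ : AddChar L ℂ}
  (hψ : ∀ z, ψ z = χ (Algebra.trace K L z))
include hχ hψ

lemma psi_tz (z : L) : ∑ x : K, ψ (al x * z) = (Fintype.card K : ℂ) * tz K z := by
  classical
  rw [psi_K hc h2 hχ hψ]
  split_ifs with h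
  · rw [tz_one h, mul_one]
  · rw [tz_zero h, mul_zero]

lemma R_eq {δ : L} (hδ : δ ≠ 0) (hT : T δ = 0) {g : L} (hκ : T (δ * g) ≠ 0) (a b : L) :
    ∑ u : L, ∑ v : L, qc L u * (tz K (u * v) * (1 + qc K (T (u * v * g)))) * ψ (a * u + b * v) =
    ∑ u : L, qc L u * ψ (a * u) + (Fintype.card K : ℂ) * Y K a (b * (δ * al (T (δ * g)))) := by
  classical
  set κ := T (δ * g) with hκd
  have e1 : ∀ u : L, ∑ v : L, qc L u * (tz K (u * v) * (1 + qc K (T (u * v * g)))) * ψ (a * u + b * v) =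
      ∑ x : K, qc L u * ψ (a * u + al (κ * x ^ 2) * (b * δ / u)) := by
    intro u
    by_cases hu : u = 0
    · simp [hu, qc_zero]
    have r1 : ∀ v : L, qc L u * (tz K (u * v) * (1 + qc K (T (u * v * g)))) * ψ (a * u + b * v) =
        qc L u * (tz K (u * v) * ((1 + qc K (T (u * v * g))) * ψ (a * u + b * v))) := by
      intro v; ring
    simp_rw [r1, ← Finset.mul_sum]
    rw [line_sum hc hδ hT hu]
    congr 1
    rw [← sum_sq_twist h2 hκ (fun k => ψ (a * u + al k * (b * δ / u)))]
    refine Finset.sum_congr rfl fun k _ => ?_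
    have r2 : u * (al k * (δ / u)) * g = al k * (δ * g) := by field_simp
    rw [r2, tr_mul, map_mul, ← hκd, mul_comm (qc K k)]
    congr 3
    ring
  simp_rw [e1]
  rw [Finset.sum_comm]
  have e2 : ∀ x : K, ∑ u : L, qc L u * ψ (a * u + al (κ * x ^ 2) * (b * δ / u)) =
      ∑ u : L, qc L u * ψ (al x * (a * u + b * (δ * al κ) / u)) +
      (if x = 0 then ∑ u : L, qc L u * ψ (a * u) else 0) := by
    intro x
    by_cases hx : x = 0
    · subst hx
      simp [qc_sum (ringCharL (L := L) h2)]
    · have hx' : al x ≠ 0 := by simpa using hx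
      rw [if_neg hx, add_zero]
      symm
      apply Fintype.sum_equiv (Equiv.mulLeft₀ (al x) hx')
      intro u
      change _ = qc L (al x * u) * ψ (a * (al x * u) + al (κ * x ^ 2) * (b * δ / (al x * u)))
      rw [map_mul (qc L), qc_alg hc h2 hx, one_mul]
      congr 2
      by_cases hu : u = 0
      · simp [hu]
      · rw [map_mul, map_pow]; field_simp
  simp_rw [e2, Finset.sum_add_distrib]
  rw [Finset.sum_comm]
  simp_rw [← Finset.mul_sum, psi_tz hc h2 hχ hψ]
  simp only [Finset.sum_ite_eq', Finset.mem_univ, if_true]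
  rw [add_comm]
  congr 1
  unfold Y
  rw [Finset.mul_sum]
  refine Finset.sum_congr rfl fun u _ => ?_
  ring

/-- Gauss sum on L -/
lemma gaussL {δ : L} (hδ : δ ≠ 0) (hT : T δ = 0) (b : L) :
    ∑ v : L, qc L v * ψ (b * v) = (Fintype.card K : ℂ) * (qc L δ * qc L b) := by
  have hp := psi_prim hc h2 hχ hψ
  have e0 := gauss_shift (ringCharL h2) hp b
  have e1 : ∑ v : L, qc L v * ψ (b * v) = qc L b * gaussSum (qc L) ψ := by
    rw [← e0]; refine Finset.sum_congr rfl fun v _ => ?_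
    rw [mul_comm b]
  rw [e1]
  classical
  have e2 : ∀ x : K, (if x = 0 then 0 else 1) * gaussSum (qc L) ψ = ∑ v : L, qc L v * ψ (al x * v) := by
    intro x
    by_cases hx : x = 0
    · simp [hx, qc_sum (ringCharL (L := L) h2)]
    · have := gauss_shift (ringCharL h2) hp (al x)
      rw [qc_alg hc h2 hx] at this
      rw [if_neg hx, ← this]
      refine Finset.sum_congr rfl fun v _ => ?_
      rw [mul_comm (al x)]
  have e3 : ((Fintype.card K : ℂ) - 1) * gaussSum (qc L) ψ = (Fintype.card K : ℂ) * Y K 1 (0 : L) := by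
    rw [← sum_nonzero hc, Finset.sum_mul]
    simp_rw [e2]
    rw [Finset.sum_comm]
    simp_rw [← Finset.mul_sum, psi_tz hc h2 hχ hψ]
    unfold Y
    rw [Finset.mul_sum]
    refine Finset.sum_congr rfl fun u _ => ?_
    rw [one_mul, zero_div, add_zero]; ring
  rw [Y_one_zero hc h2 hδ hT] at e3
  have hq : (Fintype.card K : ℂ) - 1 ≠ 0 := by
    have := Fintype.one_lt_card (α := K)
    intro h
    have h1 : (Fintype.card K : ℂ) = 1 := by linear_combination h
    have h2 : Fintype.card K = 1 := by exact_mod_cast h1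
    omega
  apply mul_left_cancel₀ hq
  linear_combination (qc L b) * e3

end Ysums
end WX

namespace WX
section final
variable {K L : Type} [Field K] [Fintype K] [Field L] [Fintype L] [Algebra K L]
  (hc : Fintype.card L = Fintype.card K ^ 2) (h2 : ringChar K ≠ 2)

local notation "T" => Algebra.trace K L
local notation "al" => algebraMap K L

/-- indicator of zero -/
def zi {L : Type} [Field L] (u : L) : ℂ :=
  letI := Classical.decEq L
  if u = 0 then 1 else 0

lemma zi_zero : zi (0 : L) = 1 := by simp [zi]
lemma zi_ne {u : L} (h : u ≠ 0) : zi u = 0 := by simp [zi, h]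

lemma sum_zi (f : L → ℂ) : ∑ u : L, zi u * f u = f 0 := by
  classical
  rw [Finset.sum_eq_single 0]
  · rw [zi_zero, one_mul]
  · intro u _ hu; rw [zi_ne hu, zero_mul]
  · simp

/-- The function representing the indicator of E. -/
def ind (K : Type) {L : Type} [Field K] [Fintype K] [Field L] [Fintype L] [Algebra K L]
    (g u v : L) : ℂ :=
  1 / 4 * ((1 + qc K (Algebra.trace K L (u * v))) * (1 + qc K (Algebra.trace K L (u * v * g))))
  + 1 / 4 * (qc L u * (tz K (u * v) * (1 + qc K (Algebra.trace K L (u * v * g)))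
      - tz K (u * v * g) * (1 + qc K (Algebra.trace K L (u * v)))))
  - 1 / 4 * (zi u + zi v - zi u * zi v)
  + 1 / 2 * (zi u * (1 - qc K (-1) * qc L v - zi v))

include hc h2
variable {χ : AddChar K ℂ} (hχ : χ.IsPrimitive) {ψ : AddChar L ℂ}
  (hψ : ∀ z, ψ z = χ (Algebra.trace K L z))

lemma kappa_ne {δ : L} (hδ : δ ≠ 0) (hT : T δ = 0) {g : L} (hg : qc L g = -1) : T (δ * g) ≠ 0 := by
  have hg' : g⁻¹ ∉ Set.range al := by
    rintro ⟨k, hk⟩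
    rw [← qc_inv, ← hk] at hg
    by_cases h0 : k = 0
    · simp [h0, qc_zero] at hg
    · rw [qc_alg hc h2 h0] at hg; norm_num at hg
  have := tr_ne_of hc h2 hg' hδ hT
  rwa [div_inv_eq_mul] at this

lemma kappa_rel {δ : L} (hT : T δ = 0) {g : L} (hg : qc L g = -1) :
    qc K (T (δ * g⁻¹)) = - qc K (-1) * qc K (T (δ * g)) := by
  have hg0 : g ≠ 0 := by rintro rfl; rw [qc_zero] at hg; norm_num at hg
  have hn : Algebra.norm K g ≠ 0 := nm_ne_zero hg0
  have e : T (δ * g⁻¹) = -1 * T (δ * g) * (Algebra.norm K g)⁻¹ := by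
    rw [eq_mul_inv_iff_mul_eq₀ hn]
    apply (algebraMap K L).injective
    have h1 := tr_eq (K := K) hc δ
    rw [hT, map_zero] at h1
    rw [map_mul al, map_mul al, tr_eq hc, tr_eq hc, nm_eq hc, map_neg, map_one, mul_pow, mul_pow, inv_pow]
    field_simp
    linear_combination (-(g ^ Fintype.card K + g)) * h1
  rw [e, map_mul, map_mul, qc_inv, ← qc_norm hc h2, hg]; ring

lemma Y_gen' {δ : L} (hδ : δ ≠ 0) (hT : T δ = 0) {κ : K} (hκ : κ ≠ 0) {h : L} (hh : T h ≠ 0) :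
    Y K 1 (h * (δ * al κ)) = qc K (-1) * (1 - qc K (-1) * qc L h) := by
  rw [Y_generic hc h2]
  · rw [map_mul (qc L), map_mul (qc L), qc_alg hc h2 hκ, qc_delta hc h2 hδ hT]; ring
  · rintro ⟨k, hk⟩
    apply hh
    have hd := nm_delta hc h2 hT
    have hκ' : al κ ≠ 0 := by simpa using hκ
    have hn : -Algebra.norm K δ ≠ 0 := by simpa using (nm_ne_zero (K := K) hδ)
    have : h = al (k / κ / (-Algebra.norm K δ)) * δ := by
      rw [map_div₀, map_div₀, hd, hk]; field_simp
    rw [this, tr_mul, hT, mul_zero]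

lemma Y_spe' {δ : L} (hδ : δ ≠ 0) (hT : T δ = 0) {g : L} (hg : qc L g = -1) {h : L} (hh : h ≠ 0)
    (h0 : T h = 0) :
    Y K 1 (h * (δ * al (T (δ * g)))) =
      qc K (-1) * ((Fintype.card K : ℂ) * (qc K (-1) * qc K (T (h / g))) - Fintype.card K + 2) := by
  obtain ⟨l, hl⟩ := tr_line hc hδ h0 hT
  have hl0 : l ≠ 0 := by rintro rfl; simp at hl; exact hh hl
  have hn : -Algebra.norm K δ ≠ 0 := by simpa using (nm_ne_zero (K := K) hδ)
  have hκ := kappa_ne hc h2 hδ hT hg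
  have e : h * (δ * al (T (δ * g))) = al (l * (-Algebra.norm K δ) * T (δ * g)) := by
    rw [map_mul al, map_mul al, nm_delta hc h2 hT, hl]; ring
  rw [e, Y_special hc h2 (mul_ne_zero (mul_ne_zero hl0 hn) hκ)]
  have e2 : T (h / g) = l * T (δ * g⁻¹) := by
    rw [hl, mul_div_assoc, tr_mul, div_eq_mul_inv]
  rw [e2, map_mul (qc K), map_mul (qc K), qc_neg_nm_delta hc h2 hδ hT, map_mul (qc K), kappa_rel hc h2 hT hg]
  have hx := qc_sq (F := K) (a := -1) (by simp)
  linear_combination (Fintype.card K * qc K (-1) * qc K l * qc K (T (δ * g))) * hx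

include hχ hψ

lemma sum1 (z : L) : ∑ x : L, ψ (z * x) = (Fintype.card K : ℂ) ^ 2 * zi z := by
  classical
  simp_rw [mul_comm z]
  rw [psi_L hc h2 hχ hψ]
  split_ifs with h
  · rw [h, zi_zero, mul_one]
  · rw [zi_ne h, mul_zero]

lemma total {δ : L} (hδ : δ ≠ 0) (hT : T δ = 0) {g : L} (hg : qc L g = -1) (a b : L) :
    ∑ u : L, ∑ v : L, ind K g u v * ψ (a * u + b * v) =
    1 / 4 * ((Fintype.card K : ℂ) ^ 4 * (zi a * zi b)
      + (Fintype.card K : ℂ) ^ 2 * (qc K (-1) * qc K (T (a * b)) + qc K (-1) * qc K (T (a * b / g))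
        - qc K (T (a * b)) * qc K (T (a * b / g))))
    + 1 / 4 * ((Fintype.card K : ℂ) * (Y K a (b * (δ * al (T (δ * g))))
        - Y K a (b / g * (δ * al (T (δ * g⁻¹))))))
    - 1 / 4 * ((Fintype.card K : ℂ) ^ 2 * (zi a + zi b) - 1)
    + 1 / 2 * ((Fintype.card K : ℂ) ^ 2 * zi b - 1 + Fintype.card K * qc L b) := by
  have hg0 : g ≠ 0 := by rintro rfl; rw [qc_zero] at hg; norm_num at hg
  have hg' : qc L g⁻¹ = -1 := by rw [qc_inv, hg]
  have hx := qc_sq (F := K) (a := -1) (by simp)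
  have p1 : ∑ u : L, ∑ v : L, ψ (a * u + b * v) = (Fintype.card K : ℂ) ^ 4 * (zi a * zi b) := by
    simp_rw [AddChar.map_add_eq_mul, ← Finset.mul_sum, ← Finset.sum_mul, sum1 hc h2 hχ hψ]
    ring
  have p2 := S1 hc h2 hχ hψ a b
  have shift : ∀ F : L → L → ℂ, ∑ u : L, ∑ v : L, F u (v * g) * ψ (a * u + b * v) =
      ∑ u : L, ∑ v : L, F u v * ψ (a * u + b / g * v) := by
    intro F
    refine Finset.sum_congr rfl fun u _ => ?_
    apply Fintype.sum_equiv (Equiv.mulRight₀ g hg0)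
    intro v
    change _ = F u (v * g) * ψ (a * u + b / g * (v * g))
    congr 3
    field_simp
  have p3 : ∑ u : L, ∑ v : L, qc K (T (u * v * g)) * ψ (a * u + b * v) =
      (Fintype.card K : ℂ) ^ 2 * qc K (-T (a * b / g)) := by
    have := shift (fun u v => qc K (T (u * v)))
    simp_rw [mul_assoc _ _ g]
    rw [this, S1 hc h2 hχ hψ, mul_div_assoc]
  have p4 := S4 hc h2 hχ hψ hg a b
  have p5 := R_eq hc h2 hχ hψ hδ hT (kappa_ne hc h2 hδ hT hg) a b
  have p6 : ∑ u : L, ∑ v : L, qc L u * (tz K (u * v * g) * (1 + qc K (T (u * v)))) * ψ (a * u + b * v) =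
      ∑ u : L, qc L u * ψ (a * u)
        + (Fintype.card K : ℂ) * Y K a (b / g * (δ * al (T (δ * g⁻¹)))) := by
    have := shift (fun u v => qc L u * (tz K (u * v) * (1 + qc K (T (u * v * g⁻¹)))))
    rw [R_eq hc h2 hχ hψ hδ hT (kappa_ne hc h2 hδ hT hg') a (b / g)] at this
    rw [← this]
    refine Finset.sum_congr rfl fun u _ => Finset.sum_congr rfl fun v _ => ?_
    have e1 : u * (v * g) = u * v * g := by ring
    have e2 : u * v * g * g⁻¹ = u * v := by field_simp
    rw [e1, e2]
  have p7 : ∑ u : L, ∑ v : L, zi u * ψ (a * u + b * v) = (Fintype.card K : ℂ) ^ 2 * zi b := by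
    simp_rw [← Finset.mul_sum]
    rw [sum_zi (fun u => ∑ v : L, ψ (a * u + b * v))]
    simp_rw [mul_zero, zero_add, sum1 hc h2 hχ hψ]
  have p8 : ∑ u : L, ∑ v : L, zi v * ψ (a * u + b * v) = (Fintype.card K : ℂ) ^ 2 * zi a := by
    rw [Finset.sum_comm]
    simp_rw [← Finset.mul_sum]
    rw [sum_zi (fun v => ∑ u : L, ψ (a * u + b * v))]
    simp_rw [mul_zero, add_zero, sum1 hc h2 hχ hψ]
  have p9 : ∑ u : L, ∑ v : L, zi u * (zi v * ψ (a * u + b * v)) = 1 := by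
    simp_rw [← Finset.mul_sum]
    rw [sum_zi (fun u => ∑ v : L, zi v * ψ (a * u + b * v)), sum_zi (fun v => ψ (a * 0 + b * v))]
    simp
  have p10 : ∑ u : L, ∑ v : L, zi u * (qc L v * ψ (a * u + b * v)) =
      (Fintype.card K : ℂ) * (qc L δ * qc L b) := by
    simp_rw [← Finset.mul_sum]
    rw [sum_zi (fun u => ∑ v : L, qc L v * ψ (a * u + b * v))]
    simp_rw [mul_zero, zero_add]
    exact gaussL hc h2 hχ hψ hδ hT b
  have expand : ∀ u v : L, ind K g u v * ψ (a * u + b * v) =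
      1 / 4 * ψ (a * u + b * v) + 1 / 4 * (qc K (T (u * v)) * ψ (a * u + b * v))
      + 1 / 4 * (qc K (T (u * v * g)) * ψ (a * u + b * v))
      + 1 / 4 * (qc K (T (u * v)) * qc K (T (u * v * g)) * ψ (a * u + b * v))
      + 1 / 4 * (qc L u * (tz K (u * v) * (1 + qc K (T (u * v * g)))) * ψ (a * u + b * v))
      - 1 / 4 * (qc L u * (tz K (u * v * g) * (1 + qc K (T (u * v)))) * ψ (a * u + b * v))
      + 1 / 4 * (zi u * ψ (a * u + b * v)) - 1 / 4 * (zi v * ψ (a * u + b * v))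
      - 1 / 4 * (zi u * (zi v * ψ (a * u + b * v)))
      - 1 / 2 * qc K (-1) * (zi u * (qc L v * ψ (a * u + b * v))) := by
    intro u v; unfold ind; ring
  simp_rw [expand, Finset.sum_sub_distrib, Finset.sum_add_distrib, Finset.sum_sub_distrib,
    Finset.sum_add_distrib, ← Finset.mul_sum]
  simp_rw [← Finset.mul_sum] at p7 p9 p10
  rw [p1, p2, p3, p4, p5, p6, p7, p8, p9, p10, qc_delta hc h2 hδ hT, neg_eq_neg_one_mul (T (a * b)),
    neg_eq_neg_one_mul (T (a * b / g)), map_mul (qc K) (-1), map_mul (qc K) (-1)]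
  linear_combination (1 / 2 * Fintype.card K * qc L b) * hx

lemma total_zero {g : L} (hg : qc L g = -1) :
    ∑ u : L, ∑ v : L, ind K g u v = ((Fintype.card K : ℂ) ^ 4 - 1) / 4 := by
  obtain ⟨δ, hδ, hT⟩ := exists_delta (K := K) hc
  have := total hc h2 hχ hψ hδ hT hg 0 0
  simp only [zero_mul, add_zero, AddChar.map_zero_eq_one, mul_one, zi_zero, map_zero, qc_zero,
    zero_div, Y_zero_zero hc h2] at this
  rw [this]; ring

lemma main_eval {g : L} (hg : qc L g = -1) (a b : L) (hab : (a, b) ≠ ((0 : L), (0 : L))) :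
    ∑ u : L, ∑ v : L, ind K g u v * ψ (a * u + b * v) = ((Fintype.card K : ℂ) ^ 2 - 1) / 4 ∨
    ∑ u : L, ∑ v : L, ind K g u v * ψ (a * u + b * v) = (-3 * (Fintype.card K : ℂ) ^ 2 - 1) / 4 := by
  obtain ⟨δ, hδ, hT⟩ := exists_delta (K := K) hc
  rw [total hc h2 hχ hψ hδ hT hg a b]
  have hg0 : g ≠ 0 := by rintro rfl; rw [qc_zero] at hg; norm_num at hg
  have hg' : qc L g⁻¹ = -1 := by rw [qc_inv, hg]
  have hκ1 := kappa_ne hc h2 hδ hT hg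
  have hκ2 := kappa_ne hc h2 hδ hT hg'
  have hqδ := qc_delta hc h2 hδ hT
  have hx := qc_cases (F := K) (a := -1) (by simp)
  set q : ℂ := (Fintype.card K : ℂ) with hq
  set x : ℂ := qc K (-1) with hxd
  by_cases ha : a = 0
  · have hb : b ≠ 0 := by rintro rfl; exact hab (by rw [ha])
    subst ha
    rw [Y_comm, Y_comm 0, Y_a_zero hc h2 hδ hT (by simp [hb, hδ, hκ1]),
      Y_a_zero hc h2 hδ hT (by simp [hb, hδ, hκ2, hg0]), zi_zero, zi_ne hb, div_eq_mul_inv b g]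
    simp only [map_mul (qc L), hg', qc_alg hc h2 hκ1, qc_alg hc h2 hκ2, hqδ, zero_mul, zero_div,
      map_zero, qc_zero]
    rcases qc_cases hb with h | h <;> rcases hx with h' | h' <;> rw [h, h'] <;>
      first | (left; ring; done) | (right; ring; done)
  by_cases hb : b = 0
  · subst hb
    left
    simp only [zero_mul, zero_div, mul_zero, map_zero, qc_zero, zi_zero, zi_ne ha]
    ring
  have hh : a * b ≠ 0 := mul_ne_zero ha hb
  have hh' : a * b / g ≠ 0 := div_ne_zero hh hg0
  have m1 : a * (b * (δ * al (T (δ * g)))) = a * b * (δ * al (T (δ * g))) := by ring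
  have m2 : a * (b / g * (δ * al (T (δ * g⁻¹)))) = a * b / g * (δ * al (T (δ * g⁻¹))) := by ring
  rw [Y_scale ha, Y_scale ha (b / g * _), m1, m2, zi_ne ha, zi_ne hb]
  have hr := not_range hc h2 hχ hψ hg
  by_cases h0 : T (a * b) = 0
  · have h1 : T (a * b / g) ≠ 0 := tr_ne_of hc h2 hr hh h0
    obtain ⟨l, hl⟩ := tr_line hc hδ h0 hT
    have hl0 : l ≠ 0 := by rintro rfl; simp at hl; tauto
    have hQ : qc L a * qc L b = - x := by
      rw [← map_mul, hl, map_mul, qc_alg hc h2 hl0, hqδ, one_mul]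
    rw [Y_spe' hc h2 hδ hT hg hh h0, Y_gen' hc h2 hδ hT hκ2 h1, h0, qc_zero, div_eq_mul_inv (a * b) g,
      map_mul (qc L), map_mul (qc L), hg', hQ, ← div_eq_mul_inv, ← hq, ← hxd]
    rcases hx with hx | hx <;> rcases qc_cases ha with hA | hA <;> rcases qc_cases hb with hB | hB <;>
      rcases qc_cases h1 with hG | hG <;> rw [hA, hB, hx] at hQ <;> norm_num at hQ <;>
      rw [hx, hA, hB, hG] <;>
      first | (left; ring; done) | (right; ring; done)
  by_cases h1 : T (a * b / g) = 0
  · obtain ⟨l, hl⟩ := tr_line hc hδ h1 hT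
    have hl0 : l ≠ 0 := by rintro rfl; rw [map_zero, zero_mul] at hl; exact hh' hl
    have hQ : qc L a * qc L b = x := by
      have e : a * b = al l * δ * g := by rw [← hl]; field_simp
      rw [← map_mul, e, map_mul, map_mul, qc_alg hc h2 hl0, hqδ, hg]; ring
    have e3 : a * b / g / g⁻¹ = a * b := by field_simp
    rw [Y_spe' hc h2 hδ hT hg' hh' h1, Y_gen' hc h2 hδ hT hκ1 h0, h1, qc_zero, e3,
      map_mul (qc L), hQ, ← hq, ← hxd]
    rcases hx with hx | hx <;> rcases qc_cases ha with hA | hA <;> rcases qc_cases hb with hB | hB <;>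
      rcases qc_cases h0 with hG | hG <;> rw [hA, hB, hx] at hQ <;> norm_num at hQ <;>
      rw [hx, hA, hB, hG] <;>
      first | (left; ring; done) | (right; ring; done)
  rw [Y_gen' hc h2 hδ hT hκ1 h0, Y_gen' hc h2 hδ hT hκ2 h1, div_eq_mul_inv (a * b) g,
      map_mul (qc L) (a * b), map_mul (qc L) a, hg', ← div_eq_mul_inv, ← hxd]
  rcases hx with hx | hx <;> rcases qc_cases ha with hA | hA <;> rcases qc_cases hb with hB | hB <;>
      rcases qc_cases h0 with hG | hG <;> rcases qc_cases h1 with hH | hH <;>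
      rw [hx, hA, hB, hG, hH] <;>
      first | (left; ring; done) | (right; ring; done)

end final
end WX

namespace WX
section trans
variable {K L : Type} [Field K] [Fintype K] [Field L] [Fintype L] [Algebra K L]

lemma exists_chars (p : ℕ) (hp : p.Prime) [CharP L p] :
    ∃ χ : AddChar K ℂ, χ.IsPrimitive ∧ ∃ ψ : AddChar L ℂ, (∀ z, ψ z = psiL p L z) ∧
      ∀ z, ψ z = χ (Algebra.trace K L z) := by
  haveI : Fact p.Prime := ⟨hp⟩
  haveI : CharP K p := (algebraMap K L).charP (algebraMap K L).injective p
  letI : Algebra (ZMod p) L := ZMod.algebra L p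
  letI : Algebra (ZMod p) K := ZMod.algebra K p
  haveI : IsScalarTower (ZMod p) K L := IsScalarTower.of_algebraMap_eq' (RingHom.ext_zmod _ _)
  have hz : IsPrimitiveRoot (zetaP p) p := Complex.isPrimitiveRoot_exp p hp.ne_zero
  let χ0 : AddChar (ZMod p) ℂ := AddChar.zmodChar p hz.pow_eq_one
  have hχ0 : χ0.IsPrimitive := AddChar.zmodChar_primitive_of_primitive_root p hz
  let χ : AddChar K ℂ := χ0.compAddMonoidHom (Algebra.trace (ZMod p) K).toAddMonoidHom
  refine ⟨χ, ?_, χ0.compAddMonoidHom (Algebra.trace (ZMod p) L).toAddMonoidHom, ?_, ?_⟩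
  · apply AddChar.IsPrimitive.of_ne_one
    intro h
    have h1 : χ0 1 ≠ 1 := by
      intro h1
      change zetaP p ^ (1 : ZMod p).val = 1 at h1
      have hv : (1 : ZMod p).val = 1 := by
        haveI := Fact.mk hp.one_lt
        exact ZMod.val_one p
      rw [hv, pow_one] at h1
      exact hz.ne_one hp.one_lt h1
    obtain ⟨y, hy⟩ := Algebra.trace_surjective (ZMod p) K 1
    apply h1
    have := DFunLike.congr_fun h y
    change χ0 (Algebra.trace (ZMod p) K y) = 1 at this
    rwa [hy] at this
  · intro z
    rfl
  · intro z
    change χ0 (Algebra.trace (ZMod p) L z) = χ0 (Algebra.trace (ZMod p) K (Algebra.trace K L z))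
    rw [Algebra.trace_trace]

lemma sqSet_iff (y : K) : y ∈ sqSet K ↔ qc K y = 1 := by
  rw [qc_one_iff]
  constructor
  · rintro ⟨z, hz, rfl⟩
    exact ⟨pow_ne_zero 2 hz, ⟨z, sq z⟩⟩
  · rintro ⟨h, z, rfl⟩
    exact ⟨z, by rintro rfl; simp at h, (sq z).symm⟩

variable {ω : L} (hω : IsPrim L ω)
include hω

lemma prim_ne_zero (hL : ringChar L ≠ 2) : ω ≠ 0 := by
  rintro rfl
  obtain ⟨n, hn⟩ := hω (-1) (by simp)
  rcases Nat.eq_zero_or_pos n with rfl | h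
  · rw [pow_zero] at hn
    exact Ring.neg_one_ne_one_of_char_ne_two hL hn
  · rw [zero_pow h.ne'] at hn
    simp at hn

lemma qc_prim (hL : ringChar L ≠ 2) : qc L ω = -1 := by
  have h0 := prim_ne_zero hω hL
  rcases qc_cases h0 with h | h
  · exfalso
    apply qc_ne_one hL
    ext a
    obtain ⟨n, hn⟩ := hω a a.ne_zero
    rw [hn, map_pow, h, one_pow]
    rw [← hn]; simp
  · exact h

lemma qc_pow (hL : ringChar L ≠ 2) (n : ℕ) : qc L (ω ^ n) = (-1) ^ n := by
  rw [map_pow, qc_prim hω hL]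

lemma cyc0_iff (hL : ringChar L ≠ 2) (y : L) : y ∈ cyc L ω 2 0 ↔ qc L y = 1 := by
  constructor
  · rintro ⟨k, rfl⟩
    rw [← pow_mul, ← pow_add, qc_pow hω hL, zero_add, pow_mul]; simp
  · intro h
    have hy : y ≠ 0 := by rintro rfl; rw [qc_zero] at h; norm_num at h
    obtain ⟨n, rfl⟩ := hω y hy
    rw [qc_pow hω hL] at h
    rcases Nat.even_or_odd n with h' | h'
    · obtain ⟨k, rfl⟩ := h'
      exact ⟨k, by ring⟩
    · rw [h'.neg_one_pow] at h; norm_num at h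

lemma cyc1_iff (hL : ringChar L ≠ 2) (y : L) : y ∈ cyc L ω 2 1 ↔ qc L y = -1 := by
  constructor
  · rintro ⟨k, rfl⟩
    rw [← pow_mul, ← pow_add, qc_pow hω hL, pow_add, pow_mul]; simp
  · intro h
    have hy : y ≠ 0 := by rintro rfl; rw [qc_zero] at h; norm_num at h
    obtain ⟨n, rfl⟩ := hω y hy
    rw [qc_pow hω hL] at h
    rcases Nat.even_or_odd n with h' | h'
    · rw [h'.neg_one_pow] at h; norm_num at h
    · obtain ⟨k, rfl⟩ := h'
      exact ⟨k, by ring⟩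

lemma prim_order (hL : ringChar L ≠ 2) : orderOf ω = Fintype.card L - 1 := by
  have h0 := prim_ne_zero hω hL
  let w : Lˣ := Units.mk0 ω h0
  have : orderOf w = Nat.card Lˣ := by
    apply orderOf_eq_card_of_forall_mem_zpowers
    intro x
    obtain ⟨n, hn⟩ := hω x x.ne_zero
    refine ⟨n, ?_⟩
    ext
    simp [w, hn]
  rw [Nat.card_units, Nat.card_eq_fintype_card] at this
  rw [← this, ← orderOf_units]
  rfl

end trans

/-- Elements of the prime subfield determine the power of minus one. -/
lemma qc_m1 {K : Type} [Field K] [Fintype K] (h2 : ringChar K ≠ 2) :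
    qc K (-1) = (-1) ^ ((Fintype.card K - 1) / 2) := by
  classical
  have hodd := FiniteField.odd_card_of_char_ne_two h2
  rw [qc_apply, quadraticChar_neg_one h2, ZMod.χ₄_nat_eq_if_mod_four]
  set q := Fintype.card K
  obtain h | h : q % 4 = 1 ∨ q % 4 = 3 := by omega
  · have : Even ((q - 1) / 2) := by rw [Nat.even_iff]; omega
    rw [this.neg_one_pow]
    simp [h, show q % 2 = 1 by omega]
  · have : Odd ((q - 1) / 2) := by rw [Nat.odd_iff]; omega
    rw [this.neg_one_pow]
    simp [h, show q % 2 = 1 by omega]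
end WX

namespace WX

lemma parity_sum (A : Finset ℕ) :
    (((A : Set ℕ) ∩ {i | Even i}).ncard : ℤ) - (((A : Set ℕ) ∩ {i | Odd i}).ncard : ℤ) =
      ∑ i ∈ A, (-1 : ℤ) ^ i := by
  classical
  have e1 : (A : Set ℕ) ∩ {i | Even i} = (A.filter (fun i => Even i) : Finset ℕ) := by
    ext; simp
  have e2 : (A : Set ℕ) ∩ {i | Odd i} = (A.filter (fun i => ¬ Even i) : Finset ℕ) := by
    ext; simp
  rw [e1, e2, Set.ncard_coe_finset, Set.ncard_coe_finset,
    ← Finset.sum_filter_add_sum_filter_not A (fun i => Even i)]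
  have s1 : ∑ i ∈ A.filter (fun i => Even i), (-1 : ℤ) ^ i = (A.filter (fun i => Even i)).card := by
    rw [Finset.sum_congr rfl (g := fun _ => (1 : ℤ))]
    · simp
    · intro i hi; exact (Finset.mem_filter.mp hi).2.neg_one_pow
  have s2 : ∑ i ∈ A.filter (fun i => ¬ Even i), (-1 : ℤ) ^ i =
      -(A.filter (fun i => ¬ Even i)).card := by
    rw [Finset.sum_congr rfl (g := fun _ => (-1 : ℤ))]
    · simp
    · intro i hi; exact (Nat.not_even_iff_odd.mp (Finset.mem_filter.mp hi).2).neg_one_pow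
  rw [s1, s2]; ring

/-- The combinatorial part: the conditions determine A and B. -/
lemma comb (A B P Q : Set ℕ) (hAf : A.Finite) (hBf : B.Finite) (hP : P.Subsingleton)
    (hQ : Q.Subsingleton) (e : ℤ) (he : e ≠ 0)
    (hPe : ∀ i ∈ P, (-1 : ℤ) ^ i = -e) (hQe : ∀ i ∈ Q, (-1 : ℤ) ^ i = e)
    (hsym : (A \ B) ∪ (B \ A) = P ∪ Q) (hcard : A.ncard = B.ncard)
    (hpar : ((A ∩ {i | Even i}).ncard : ℤ) + (B ∩ {i | Odd i}).ncard =
      ((A ∩ {i | Odd i}).ncard : ℤ) + (B ∩ {i | Even i}).ncard - 2 * e) :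
    A \ B = P ∧ B \ A = Q := by
  classical
  lift A to Finset ℕ using hAf
  lift B to Finset ℕ using hBf
  have hpA := parity_sum A
  have hpB := parity_sum B
  have hs : ∑ i ∈ A, (-1 : ℤ) ^ i - ∑ i ∈ B, (-1 : ℤ) ^ i = -2 * e := by linarith
  rw [Set.ncard_coe_finset, Set.ncard_coe_finset] at hcard
  have d1 := Finset.sum_inter_add_sum_sdiff A B (fun i => (-1 : ℤ) ^ i)
  have d2 := Finset.sum_inter_add_sum_sdiff B A (fun i => (-1 : ℤ) ^ i)
  have c1 := Finset.card_inter_add_card_sdiff A B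
  have c2 := Finset.card_inter_add_card_sdiff B A
  rw [Finset.inter_comm B A] at d2 c2
  have hs' : ∑ i ∈ A \ B, (-1 : ℤ) ^ i - ∑ i ∈ B \ A, (-1 : ℤ) ^ i = -2 * e := by linarith
  have hc' : (A \ B).card = (B \ A).card := by omega
  have hm : ∀ i, (i ∈ A \ B ∨ i ∈ B \ A) ↔ (i ∈ P ∨ i ∈ Q) := by
    intro i
    have := Set.ext_iff.mp hsym i
    simpa using this
  have hd : ∀ i, i ∈ A \ B → i ∈ B \ A → False := by
    intro i h1 h2
    simp only [Finset.mem_sdiff] at h1 h2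
    exact h1.2 h2.1
  rw [← Finset.coe_sdiff, ← Finset.coe_sdiff]
  generalize A \ B = a at *
  generalize B \ A = b at *
  have ha : a.Nonempty := by
    rw [Finset.nonempty_iff_ne_empty]
    intro h
    rw [h, Finset.card_empty] at hc'
    have hb : b = ∅ := Finset.card_eq_zero.mp hc'.symm
    rw [h, hb] at hs'
    simp at hs'
    exact he hs'
  have hb : b.Nonempty := by
    rw [← Finset.card_pos, ← hc', Finset.card_pos]; exact ha
  obtain ⟨i, hi⟩ := ha
  obtain ⟨j, hj⟩ := hb
  have hij : i ≠ j := by rintro rfl; exact hd i hi hj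
  rcases (hm i).mp (Or.inl hi) with hiP | hiQ <;> rcases (hm j).mp (Or.inr hj) with hjP | hjQ
  · exact absurd (hP hiP hjP) hij
  · constructor
    · ext k
      simp only [Finset.mem_coe]
      constructor
      · intro hk
        rcases (hm k).mp (Or.inl hk) with h | h
        · exact h
        · exfalso; rw [hQ h hjQ] at hk; exact hd j hk hj
      · intro hk; rw [hP hk hiP]; exact hi
    · ext k
      simp only [Finset.mem_coe]
      constructor
      · intro hk
        rcases (hm k).mp (Or.inr hk) with h | h
        · exfalso; rw [hP h hiP] at hk; exact hd i hi hk
        · exact h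
      · intro hk; rw [hQ hk hjQ]; exact hj
  · exfalso
    have ea : a = {i} := by
      ext k
      rw [Finset.mem_singleton]
      constructor
      · intro hk
        rcases (hm k).mp (Or.inl hk) with h | h
        · exfalso; rw [hP h hjP] at hk; exact hd j hk hj
        · exact hQ h hiQ
      · rintro rfl; exact hi
    have eb : b = {j} := by
      ext k
      rw [Finset.mem_singleton]
      constructor
      · intro hk
        rcases (hm k).mp (Or.inr hk) with h | h
        · exact hP h hjP
        · exfalso; rw [hQ h hiQ] at hk; exact hd i hi hk
      · rintro rfl; exact hj
    rw [ea, eb, Finset.sum_singleton, Finset.sum_singleton, hPe j hjP, hQe i hiQ] at hs'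
    apply he; linarith
  · exact absurd (hQ hiQ hjQ) hij

section trans
variable {K L : Type} [Field K] [Fintype K] [Field L] [Fintype L] [Algebra K L]
  (hc : Fintype.card L = Fintype.card K ^ 2) (h2 : ringChar K ≠ 2)
  {ω : L} (hω : IsPrim L ω)
include hc h2

lemma line_sq {w w' g : L} (hw : w ≠ 0) (h1 : Algebra.trace K L w = 0)
    (h1' : Algebra.trace K L w' = 0) (hs : qc K (Algebra.trace K L (w * g)) = 1)
    (hs' : qc K (Algebra.trace K L (w' * g)) = 1) : ∃ z : K, z ≠ 0 ∧ w' = algebraMap K L z ^ 2 * w := by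
  obtain ⟨k, hk⟩ := tr_line hc hw h1' h1
  rw [hk, mul_assoc, tr_mul, map_mul, hs, mul_one, qc_one_iff] at hs'
  obtain ⟨hk0, z, rfl⟩ := hs'
  refine ⟨z, by rintro rfl; simp at hk0, ?_⟩
  rw [hk, map_mul, sq]

include hω

lemma decomp {w : L} (hw : w ≠ 0) :
    ∃ i < 2 * Fintype.card K + 2, ∃ x : K, x ≠ 0 ∧ w = algebraMap K L x ^ 2 * ω ^ i := by
  obtain ⟨n, rfl⟩ := hω w hw
  have h0 := prim_ne_zero hω (ringCharL (L := L) h2)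
  refine ⟨n % (2 * Fintype.card K + 2), Nat.mod_lt _ (by omega),
    Algebra.norm K ω ^ (n / (2 * Fintype.card K + 2)), pow_ne_zero _ (nm_ne_zero h0), ?_⟩
  rw [map_pow, nm_eq hc, ← pow_succ', ← pow_mul, ← pow_mul, ← pow_add]
  congr 1
  conv_lhs => rw [← Nat.div_add_mod n (2 * Fintype.card K + 2)]
  ring

lemma sub0 {i j : ℕ} (hij : i ≤ j) (hj : j < 2 * Fintype.card K + 2) {z : K} (hz : z ≠ 0)
    (h : ω ^ j = algebraMap K L z ^ 2 * ω ^ i) : i = j := by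
  have hL := ringCharL (L := L) h2
  have h0 := prim_ne_zero hω hL
  obtain ⟨d, rfl⟩ := Nat.exists_eq_add_of_le hij
  have hd : ω ^ d = algebraMap K L z ^ 2 := by
    rw [pow_add, mul_comm] at h
    exact mul_right_cancel₀ (pow_ne_zero _ h0) h
  have hq := oddK (K := K) h2
  obtain ⟨m, hm⟩ := hq
  have h1 : ω ^ (d * m) = 1 := by
    rw [pow_mul, hd, ← pow_mul, ← map_pow]
    have := FiniteField.pow_card_sub_one_eq_one z hz
    rw [hm, Nat.add_sub_cancel] at this
    rw [this, map_one]
  have hdvd := orderOf_dvd_of_pow_eq_one h1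
  rw [prim_order hω hL, hc] at hdvd
  have hcard : 1 < Fintype.card K := Fintype.one_lt_card
  have hm0 : 0 < m := by omega
  have e : Fintype.card K ^ 2 - 1 = (2 * Fintype.card K + 2) * m := by
    rw [hm]
    have : (2 * m + 1) ^ 2 = (2 * (2 * m + 1) + 2) * m + 1 := by ring
    omega
  rw [e] at hdvd
  have := Nat.dvd_of_mul_dvd_mul_right hm0 hdvd
  have := Nat.eq_zero_of_dvd_of_lt this (by omega)
  omega

lemma sub1 {i j : ℕ} (hi : i < 2 * Fintype.card K + 2) (hj : j < 2 * Fintype.card K + 2) {z : K}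
    (hz : z ≠ 0) (h : ω ^ j = algebraMap K L z ^ 2 * ω ^ i) : i = j := by
  rcases le_total i j with hij | hij
  · exact sub0 hc h2 hω hij hj hz h
  · refine (sub0 hc h2 hω hij hi (inv_ne_zero hz) ?_).symm
    have : algebraMap K L z ≠ 0 := by simpa using hz
    rw [h, map_inv₀]; field_simp

lemma D_iff {ε : ℂ} (hε : ε ≠ 0) {C : Set L} (hC : ∀ y, y ∈ C ↔ qc L y = ε) {S : Set ℕ}
    {P : L → Prop} (hS : ∀ i, i ∈ S ↔ i < 2 * Fintype.card K + 2 ∧ P (ω ^ i))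
    (hP : ∀ k : K, k ≠ 0 → ∀ w, P (algebraMap K L k ^ 2 * w) ↔ P w) (u v : L) :
    (u, v) ∈ {w : L × L | ∃ x : K, x ≠ 0 ∧ ∃ y ∈ C, ∃ i ∈ S,
      w = (algebraMap K L x * y, algebraMap K L x * y⁻¹ * ω ^ i)} ↔
    qc L u = ε ∧ v ≠ 0 ∧ P (u * v) := by
  have hL := ringCharL (L := L) h2
  have h0 := prim_ne_zero hω hL
  have hne : ∀ y, qc L y = ε → y ≠ 0 := by
    rintro y hy rfl; rw [qc_zero] at hy; exact hε hy.symm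
  constructor
  · rintro ⟨x, hx, y, hy, i, hi, h⟩
    obtain ⟨rfl, rfl⟩ := Prod.mk.inj h
    have hx' : algebraMap K L x ≠ 0 := by simpa using hx
    rw [hC] at hy
    have hy0 := hne y hy
    refine ⟨?_, ?_, ?_⟩
    · rw [map_mul, qc_alg hc h2 hx, hy, one_mul]
    · exact mul_ne_zero (mul_ne_zero hx' (inv_ne_zero hy0)) (pow_ne_zero _ h0)
    · have e : algebraMap K L x * y * (algebraMap K L x * y⁻¹ * ω ^ i) =
          algebraMap K L x ^ 2 * ω ^ i := by field_simp
      rw [e, hP x hx]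
      exact ((hS i).mp hi).2
  · rintro ⟨hu, hv, hw⟩
    have hu0 := hne u hu
    obtain ⟨i, hi, x, hx, hxi⟩ := decomp hc h2 hω (mul_ne_zero hu0 hv)
    have hx' : algebraMap K L x ≠ 0 := by simpa using hx
    rw [hxi, hP x hx] at hw
    refine ⟨x, hx, u / algebraMap K L x, ?_, i, (hS i).mpr ⟨hi, hw⟩, ?_⟩
    · rw [hC, div_eq_mul_inv, map_mul, qc_inv, qc_alg hc h2 hx, mul_one, hu]
    · ext
      · simp only; field_simp
      · simp only
        have : v = u * v / u := by field_simp
        rw [this, hxi]; field_simp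

omit hω in
lemma ind_eq {g : L} (hg : qc L g = -1) (hr : g⁻¹ ∉ Set.range (algebraMap K L)) (u v : L) :
    (((u = 0 ∧ qc L v = -qc K (-1)) ∨
      (qc L u = 1 ∧ v ≠ 0 ∧ (qc K (Algebra.trace K L (u * v * g)) = 1 ∧
        (qc K (Algebra.trace K L (u * v)) = 1 ∨ Algebra.trace K L (u * v) = 0))) ∨
      (qc L u = -1 ∧ v ≠ 0 ∧ (qc K (Algebra.trace K L (u * v)) = 1 ∧
        (qc K (Algebra.trace K L (u * v * g)) = 1 ∨ Algebra.trace K L (u * v * g) = 0)))) →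
      ind K g u v = 1) ∧
    (¬((u = 0 ∧ qc L v = -qc K (-1)) ∨
      (qc L u = 1 ∧ v ≠ 0 ∧ (qc K (Algebra.trace K L (u * v * g)) = 1 ∧
        (qc K (Algebra.trace K L (u * v)) = 1 ∨ Algebra.trace K L (u * v) = 0))) ∨
      (qc L u = -1 ∧ v ≠ 0 ∧ (qc K (Algebra.trace K L (u * v)) = 1 ∧
        (qc K (Algebra.trace K L (u * v * g)) = 1 ∨ Algebra.trace K L (u * v * g) = 0)))) →
      ind K g u v = 0) := by
  have n1 : (-1 : ℂ) ≠ 1 := by norm_num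
  have n2 : (1 : ℂ) ≠ -1 := by norm_num
  have hx := qc_cases (F := K) (a := -1) (by simp)
  have ht0 : tz K (0 : L) = 1 := tz_one (map_zero _)
  unfold ind
  by_cases hu : u = 0
  · subst hu
    by_cases hv : v = 0
    · subst hv
      rcases hx with hx | hx <;> simp [hx, qc_zero, zi_zero, ht0]
    · rcases hx with hx | hx <;> rcases qc_cases hv with h | h <;>
        simp [hx, qc_zero, zi_zero, ht0, h, n1, n2, zi_ne hv] <;> norm_num
  by_cases hv : v = 0
  · subst hv
    simp [hu, qc_zero, zi_zero, ht0, zi_ne hu]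
  have hw : u * v ≠ 0 := mul_ne_zero hu hv
  rw [zi_ne hu, zi_ne hv]
  by_cases h0 : Algebra.trace K L (u * v) = 0
  · have h1 : Algebra.trace K L (u * v * g) ≠ 0 := by
      have := tr_ne_of hc h2 hr hw h0
      rwa [div_inv_eq_mul] at this
    rw [tz_one h0, tz_zero h1, h0, qc_zero]
    rcases qc_cases hu with h | h <;> rcases qc_cases h1 with h' | h' <;>
      simp [h, h', n1, n2, hu, hv] <;> norm_num
  rw [tz_zero h0]
  by_cases h1 : Algebra.trace K L (u * v * g) = 0
  · rw [tz_one h1, h1, qc_zero]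
    rcases qc_cases hu with h | h <;> rcases qc_cases h0 with h' | h' <;>
      simp [h, h', n1, n2, hu, hv] <;> norm_num
  rw [tz_zero h1]
  rcases qc_cases hu with h | h <;> rcases qc_cases h0 with h' | h' <;>
    rcases qc_cases h1 with h'' | h'' <;>
      simp [h, h', h'', n1, n2, hu, hv, h0, h1] <;> norm_num

end trans
end WX

/-- Theorem 4.1(1): `E₀ = D₀ ∪ D₂ ∪ D₃` is of type Q. -/
theorem wilson_xiang_E0_typeQ
    (p s q : ℕ) (hp : p.Prime) (hpodd : p ≠ 2) (hs : 0 < s) (hq : q = p ^ s)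
    (K L : Type) [Field K] [Fintype K] [Field L] [Fintype L] [Algebra K L] [CharP L p]
    (hK : Fintype.card K = q) (hL : Fintype.card L = q ^ 2)
    (ω : L) (hω : IsPrim L ω)
    (c : ℕ) (hc : c < 2 * q + 2) (hcodd : Odd c)
    (I₁ I₂ J₁ J₂ : Set ℕ)
    (hI₁ : I₁ = {i | i < 2 * q + 2 ∧ Algebra.trace K L (ω ^ i) = 0})
    (hI₂ : I₂ = {i | i < 2 * q + 2 ∧ Algebra.trace K L (ω ^ i) ∈ sqSet K})
    (hJ₁ : J₁ = {i | i < 2 * q + 2 ∧ Algebra.trace K L (ω ^ (i + c)) = 0})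
    (hJ₂ : J₂ = {i | i < 2 * q + 2 ∧ Algebra.trace K L (ω ^ (i + c)) ∈ sqSet K})
    (X₁c X₃c : Set ℕ)
    (hX₁c : X₁c = (I₁ ∩ J₂) ∪ (I₂ ∩ J₁)) (hX₃c : X₃c = I₂ ∩ J₂)
    (τ : ℕ) (hτ : τ = if q % 4 = 3 then 0 else 1)
    (A B : Set ℕ) (hA : ∀ i ∈ A, i < 2 * q + 2) (hB : ∀ i ∈ B, i < 2 * q + 2)
    (hAB : A ∩ B = X₃c) (hABsym : (A \ B) ∪ (B \ A) = X₁c)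
    (D₀ D₁ D₂ D₃ : Set (L × L))
    (hD₀ : D₀ = {w | ∃ y ∈ cyc L ω 2 τ, w = ((0 : L), y)})
    (hD₁ : D₁ = {w | ∃ y ∈ cyc L ω 2 0, w = (y, (0 : L))})
    (hD₂ : D₂ = {w | ∃ x : K, x ≠ 0 ∧ ∃ y ∈ cyc L ω 2 0, ∃ i ∈ A,
      w = (algebraMap K L x * y, algebraMap K L x * y⁻¹ * ω ^ i)})
    (hD₃ : D₃ = {w | ∃ x : K, x ≠ 0 ∧ ∃ y ∈ cyc L ω 2 1, ∃ i ∈ B,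
      w = (algebraMap K L x * y, algebraMap K L x * y⁻¹ * ω ^ i)})
    (hcardA : A.ncard = (q + 1) / 2) (hcardB : B.ncard = (q + 1) / 2)
    (hpar : ((A ∩ {i | Even i}).ncard : ℤ) + (B ∩ {i | Odd i}).ncard =
      ((A ∩ {i | Odd i}).ncard : ℤ) + (B ∩ {i | Even i}).ncard
        - 2 * (-1) ^ ((q - 1) / 2))
    : IsTypeQ p q L (D₀ ∪ D₂ ∪ D₃) := by
  classical
  subst hI₁ hI₂ hJ₁ hJ₂ hX₁c hX₃c
  have hcL : Fintype.card L = Fintype.card K ^ 2 := by rw [hL, hK]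
  have h2 : ringChar K ≠ 2 := by
    have : CharP K p := (algebraMap K L).charP (algebraMap K L).injective p
    rw [ringChar.eq K p]; exact hpodd
  have hL2 := WX.ringCharL (L := L) h2
  obtain ⟨χ, hχ, ψ, hψ1, hψ⟩ := WX.exists_chars (K := K) (L := L) p hp
  have hω0 := WX.prim_ne_zero hω hL2
  have hg : WX.qc L (ω ^ c) = -1 := by rw [WX.qc_pow hω hL2, hcodd.neg_one_pow]
  have hg' : WX.qc L (ω ^ c)⁻¹ = -1 := by rw [WX.qc_inv, hg]
  have hr := WX.not_range hcL h2 hχ hψ hg'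
  have hqodd : q % 2 = 1 := by
    have := WX.oddK (K := K) h2
    rw [hK] at this; exact Nat.odd_iff.mp this
  have hx : WX.qc K (-1) = (-1) ^ ((q - 1) / 2) := by rw [WX.qc_m1 h2, hK]
  have hzero : ∀ n : ℕ, Algebra.trace K L (ω ^ n) = 0 → (-1 : ℤ) ^ n = -(-1) ^ ((q - 1) / 2) := by
    intro n hn
    have := WX.qc_delta hcL h2 (pow_ne_zero n hω0) hn
    rw [WX.qc_pow hω hL2, hx] at this
    exact_mod_cast this
  simp only [WX.sqSet_iff] at hAB hABsym
  have hAf : A.Finite := (Set.finite_lt_nat (2 * q + 2)).subset hA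
  have hBf : B.Finite := (Set.finite_lt_nat (2 * q + 2)).subset hB
  obtain ⟨hAP, hBQ⟩ := WX.comb A B _ _ hAf hBf (by
      rintro i ⟨⟨hi, hi1⟩, -, hi2⟩ j ⟨⟨hj, hj1⟩, -, hj2⟩
      rw [pow_add] at hi2 hj2
      obtain ⟨z, hz, h⟩ := WX.line_sq hcL h2 (pow_ne_zero i hω0) hi1 hj1 hi2 hj2
      exact WX.sub1 hcL h2 hω (by rwa [hK]) (by rwa [hK]) hz h) (by
      rintro i ⟨⟨hi, hi2⟩, -, hi1⟩ j ⟨⟨hj, hj2⟩, -, hj1⟩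
      have e : ∀ n : ℕ, ω ^ n = ω ^ (n + c) * (ω ^ c)⁻¹ := by
        intro n; rw [pow_add, mul_assoc, mul_inv_cancel₀ (pow_ne_zero c hω0), mul_one]
      rw [e] at hi2 hj2
      obtain ⟨z, hz, h⟩ := WX.line_sq hcL h2 (pow_ne_zero _ hω0) hi1 hj1 hi2 hj2
      refine WX.sub1 hcL h2 hω (by rwa [hK]) (by rwa [hK]) hz ?_
      rw [e j, h, e i]; ring) ((-1) ^ ((q - 1) / 2)) (pow_ne_zero _ (by norm_num))
      (fun i hi => hzero i hi.1.2)
      (fun i hi => by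
        have := hzero _ hi.2.2
        rw [pow_add, hcodd.neg_one_pow] at this
        linarith) hABsym (by rw [hcardA, hcardB]) hpar
  have hSA : ∀ i, i ∈ A ↔ i < 2 * Fintype.card K + 2 ∧
      (fun w : L => WX.qc K (Algebra.trace K L (w * ω ^ c)) = 1 ∧
        (WX.qc K (Algebra.trace K L w) = 1 ∨ Algebra.trace K L w = 0)) (ω ^ i) := by
    intro i
    have h1 := Set.ext_iff.mp hAP i
    have h3 := Set.ext_iff.mp hAB i
    simp only [Set.mem_inter_iff, Set.mem_diff, Set.mem_setOf_eq] at h1 h3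
    rw [hK]
    simp only [← pow_add]
    by_cases hiB : i ∈ B <;> tauto
  have hSB : ∀ i, i ∈ B ↔ i < 2 * Fintype.card K + 2 ∧
      (fun w : L => WX.qc K (Algebra.trace K L w) = 1 ∧
        (WX.qc K (Algebra.trace K L (w * ω ^ c)) = 1 ∨ Algebra.trace K L (w * ω ^ c) = 0)) (ω ^ i) := by
    intro i
    have h1 := Set.ext_iff.mp hBQ i
    have h3 := Set.ext_iff.mp hAB i
    simp only [Set.mem_inter_iff, Set.mem_diff, Set.mem_setOf_eq] at h1 h3
    rw [hK]
    simp only [← pow_add]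
    by_cases hiA : i ∈ A <;> tauto
  have htr : ∀ k : K, ∀ w : L, Algebra.trace K L (algebraMap K L k ^ 2 * w) =
      k ^ 2 * Algebra.trace K L w := by
    intro k w
    rw [← map_pow, WX.tr_mul]
  have hqtr : ∀ k : K, k ≠ 0 → ∀ t : K, WX.qc K (k ^ 2 * t) = WX.qc K t := by
    intro k hk t
    rw [map_mul, WX.qc_pow_two hk, one_mul]
  have hztr : ∀ k : K, k ≠ 0 → ∀ t : K, k ^ 2 * t = 0 ↔ t = 0 := by
    intro k hk t
    simp [hk]
  have hE : ∀ u v : L, (u, v) ∈ D₀ ∪ D₂ ∪ D₃ ↔ ((u = 0 ∧ WX.qc L v = -WX.qc K (-1)) ∨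
      (WX.qc L u = 1 ∧ v ≠ 0 ∧ (WX.qc K (Algebra.trace K L (u * v * ω ^ c)) = 1 ∧
        (WX.qc K (Algebra.trace K L (u * v)) = 1 ∨ Algebra.trace K L (u * v) = 0))) ∨
      (WX.qc L u = -1 ∧ v ≠ 0 ∧ (WX.qc K (Algebra.trace K L (u * v)) = 1 ∧
        (WX.qc K (Algebra.trace K L (u * v * ω ^ c)) = 1 ∨
          Algebra.trace K L (u * v * ω ^ c) = 0)))) := by
    intro u v
    have hD2 := WX.D_iff (P := fun w : L => WX.qc K (Algebra.trace K L (w * ω ^ c)) = 1 ∧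
        (WX.qc K (Algebra.trace K L w) = 1 ∨ Algebra.trace K L w = 0))
      hcL h2 hω one_ne_zero (WX.cyc0_iff hω hL2) hSA (by
      intro k hk w
      simp only [mul_assoc, htr, hqtr k hk, hztr k hk]) u v
    have hD3 := WX.D_iff (P := fun w : L => WX.qc K (Algebra.trace K L w) = 1 ∧
        (WX.qc K (Algebra.trace K L (w * ω ^ c)) = 1 ∨ Algebra.trace K L (w * ω ^ c) = 0))
      hcL h2 hω (neg_ne_zero.mpr one_ne_zero) (WX.cyc1_iff hω hL2) hSB (by
      intro k hk w
      simp only [mul_assoc, htr, hqtr k hk, hztr k hk]) u v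
    have hD0 : (u, v) ∈ D₀ ↔ u = 0 ∧ WX.qc L v = -WX.qc K (-1) := by
      have hcyc : v ∈ cyc L ω 2 τ ↔ WX.qc L v = -WX.qc K (-1) := by
        rw [hx, hτ]
        split_ifs with h
        · have : Odd ((q - 1) / 2) := by rw [Nat.odd_iff]; omega
          rw [this.neg_one_pow, WX.cyc0_iff hω hL2, neg_neg]
        · have : Even ((q - 1) / 2) := by rw [Nat.even_iff]; omega
          rw [this.neg_one_pow, WX.cyc1_iff hω hL2]
      rw [← hcyc, hD₀]
      constructor
      · rintro ⟨y, hy, h⟩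
        obtain ⟨rfl, rfl⟩ := Prod.mk.inj h
        exact ⟨rfl, hy⟩
      · rintro ⟨rfl, hy⟩
        exact ⟨v, hy, rfl⟩
    rw [Set.mem_union, Set.mem_union, hD0, hD₂, hD₃, or_assoc]
    exact or_congr Iff.rfl (or_congr hD2 hD3)
  obtain ⟨E, hEE⟩ : ∃ E, E = D₀ ∪ D₂ ∪ D₃ := ⟨_, rfl⟩
  rw [← hEE] at hE ⊢
  have hind : ∀ u v : L, WX.ind K (ω ^ c) u v = if (u, v) ∈ E then 1 else 0 := by
    intro u v
    have := WX.ind_eq hcL h2 hg hr u v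
    rw [← hE] at this
    split_ifs with h
    · exact this.1 h
    · exact this.2 h
  constructor
  · have h1 := WX.total_zero hcL h2 hχ hψ hg
    simp_rw [hind] at h1
    rw [← Fintype.sum_prod_type (fun z : L × L => if z ∈ E then (1 : ℂ) else 0),
      Finset.sum_boole, hK] at h1
    have h3 : E.ncard = (Finset.univ.filter (fun z => z ∈ E)).card := by
      rw [← Set.ncard_coe_finset]; simp
    rw [← h3] at h1
    have hq1 : 1 ≤ q ^ 4 := Nat.one_le_pow _ _ (by omega)
    have h4 : ((4 * E.ncard + 1 : ℕ) : ℂ) = ((q ^ 4 : ℕ) : ℂ) := by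
      push_cast; rw [h1]; ring
    have h5 : 4 * E.ncard + 1 = q ^ 4 := by exact_mod_cast h4
    omega
  · intro a b hab
    have h1 := WX.main_eval hcL h2 hχ hψ hg a b hab
    have h3 : psiSum p L a b E =
        ∑ u : L, ∑ v : L, WX.ind K (ω ^ c) u v * ψ (a * u + b * v) := by
      unfold psiSum
      rw [finsum_mem_def, finsum_eq_sum_of_fintype, Fintype.sum_prod_type]
      refine Finset.sum_congr rfl fun u _ => Finset.sum_congr rfl fun v _ => ?_
      rw [hind, hψ1, Set.indicator_apply]
      split_ifs <;> simp
    rw [h3, ← hK]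
    exact h1

end
end
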